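/- Let M be a finite R-module and let n, t be integers. The following are equivalent: (i) M is reduced G_C-perfect of G_C-dimension n and Ext_R^n(M,C) is G_C-perfect of G_C-dimension n+t−1; (ii) Tr_C(M) is reduced G_C-perfect of G_C-dimension t and Ext_R^t(Tr_C(M),C) is G_C-perfect of G_C-dimension n+t−1. -/

import Mathlib

open CategoryTheory TensorProduct

noncomputable section

universe u

variable (R : Type u) [CommRing R]

/-- The `i`-th Ext module `Ext_R^i(M, N)`. -/
def ExtM (M N : ModuleCat.{u} R) (i : ℕ) : ModuleCat.{u} R :=
  ((Ext R (ModuleCat.{u} R) i).obj (Opposite.op M)).obj N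

/-- The `i`-th Tor module `Tor_i^R(M, N)`. -/
def TorM (M N : ModuleCat.{u} R) (i : ℕ) : ModuleCat.{u} R :=
  ((Tor (ModuleCat.{u} R) i).obj M).obj N

/-- The biduality (evaluation) map `M → Hom_R(Hom_R(M, C), C)`. -/
def bidualityMap (C M : ModuleCat.{u} R) :
    ↥M →ₗ[R] ((↥M →ₗ[R] ↥C) →ₗ[R] ↥C) :=
  (LinearMap.id : (↥M →ₗ[R] ↥C) →ₗ[R] (↥M →ₗ[R] ↥C)).flip

/-- `C` is a semidualizing `R`-module. -/
def IsSemidualizing (C : ModuleCat.{u} R) : Prop :=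
  Module.Finite R ↥C ∧
  Function.Bijective (fun r : R => (r • LinearMap.id : ↥C →ₗ[R] ↥C)) ∧
  ∀ i : ℕ, 0 < i → Subsingleton (ExtM R C C i)

/-- `M` is totally `C`-reflexive. -/
def IsTotallyCReflexive (C M : ModuleCat.{u} R) : Prop :=
  Module.Finite R ↥M ∧
  Function.Bijective (bidualityMap R C M) ∧
  (∀ i : ℕ, 0 < i → Subsingleton (ExtM R M C i)) ∧
  (∀ i : ℕ, 0 < i → Subsingleton (ExtM R (ModuleCat.of R (↥M →ₗ[R] ↥C)) C i))

/-- `G_C`-dimension of `M` is at most `n`: there is an exact sequence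
`0 → X_n → ⋯ → X_0 → M → 0` with each `X_i` totally `C`-reflexive. -/
def gcdimLE (C : ModuleCat.{u} R) : ℕ → ModuleCat.{u} R → Prop
  | 0, M => IsTotallyCReflexive R C M
  | n+1, M => ∃ (X K : ModuleCat.{u} R) (f : ↥K →ₗ[R] ↥X) (g : ↥X →ₗ[R] ↥M),
      Function.Injective f ∧ Function.Surjective g ∧
      LinearMap.ker g = LinearMap.range f ∧
      IsTotallyCReflexive R C X ∧ gcdimLE C n K

/-- The `G_C`-dimension of `M`, as an element of `ℕ∞`. -/
def gcdim (C M : ModuleCat.{u} R) : ℕ∞ :=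
  sInf ((fun n : ℕ => (n : ℕ∞)) '' {n | gcdimLE R C n M})

/-- `grade_R(M) = inf { i | Ext_R^i(M, R) ≠ 0 }`, with `grade 0 = ∞`. -/
def gradeR (M : ModuleCat.{u} R) : ℕ∞ :=
  sInf ((fun i : ℕ => (i : ℕ∞)) ''
    {i | ¬ Subsingleton (ExtM R M (ModuleCat.of R R) i)})

/-- Reduced grade of `M` with respect to `C`. -/
def rgrade (C M : ModuleCat.{u} R) : ℕ∞ :=
  sInf ((fun i : ℕ => (i : ℕ∞)) ''
    {i | 0 < i ∧ ¬ Subsingleton (ExtM R M C i)})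

/-- `M` is reduced `G_C`-perfect. -/
def IsReducedGCPerfect (C M : ModuleCat.{u} R) : Prop :=
  gcdim R C M ≠ ⊤ ∧ rgrade R C M = gcdim R C M

/-- `M` is `G_C`-perfect. -/
def IsGCPerfect (C M : ModuleCat.{u} R) : Prop :=
  gcdim R C M ≠ ⊤ ∧ gradeR R M = gcdim R C M

/-- `π : P → M` is a projective cover: `P` projective, `π` surjective with superfluous kernel. -/
def IsProjectiveCover {P M : ModuleCat.{u} R} (π : ↥P →ₗ[R] ↥M) : Prop :=
  Module.Projective R ↥P ∧ Function.Surjective π ∧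
  ∀ N : Submodule R ↥P, N ⊔ LinearMap.ker π = ⊤ → N = ⊤

/-- `P₁ →d P₀ →π M → 0` is a minimal projective presentation of `M`. -/
def IsMinimalPresentation {P1 P0 M : ModuleCat.{u} R}
    (d : ↥P1 →ₗ[R] ↥P0) (π : ↥P0 →ₗ[R] ↥M) : Prop :=
  Module.Finite R ↥P1 ∧ Module.Finite R ↥P0 ∧
  IsProjectiveCover R π ∧
  LinearMap.range d = LinearMap.ker π ∧
  Module.Projective R ↥P1 ∧
  ∀ N : Submodule R ↥P1, N ⊔ LinearMap.ker d = ⊤ → N = ⊤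

/-- `T` is (a module isomorphic to) the transpose `Tr_C(M)` of `M` with respect to `C`,
computed from a minimal projective presentation of `M`. -/
def IsTransposeC (C M T : ModuleCat.{u} R) : Prop :=
  ∃ (P1 P0 : ModuleCat.{u} R) (d : ↥P1 →ₗ[R] ↥P0) (π : ↥P0 →ₗ[R] ↥M),
    IsMinimalPresentation R d π ∧
    Nonempty (↥T ≃ₗ[R]
      ((↥P1 →ₗ[R] ↥C) ⧸ LinearMap.range (LinearMap.lcomp R ↥C d)))

/-- `T` is the usual Auslander transpose `Tr(M) = Tr_R(M)`. -/
def IsTranspose (M T : ModuleCat.{u} R) : Prop :=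
  IsTransposeC R (ModuleCat.of R R) M T

/-- `S` is (a module isomorphic to) the first syzygy `Ω N`, i.e. the kernel of a
projective cover of `N`. -/
def IsSyzygyOf (N S : ModuleCat.{u} R) : Prop :=
  ∃ (P : ModuleCat.{u} R) (π : ↥P →ₗ[R] ↥N),
    Module.Finite R ↥P ∧ IsProjectiveCover R π ∧
    Nonempty (↥S ≃ₗ[R] LinearMap.ker π)

/-- `S` is (a module isomorphic to) the `n`-th syzygy `Ωⁿ M`. -/
def IsNthSyzygy : ℕ → ModuleCat.{u} R → ModuleCat.{u} R → Prop
  | 0, M, S => Nonempty (↥S ≃ₗ[R] ↥M)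
  | n+1, M, S => ∃ K : ModuleCat.{u} R, IsNthSyzygy n M K ∧ IsSyzygyOf R K S

/-- `L` is (a module isomorphic to) `λ M = Ω Tr M`. -/
def IsLambda (M L : ModuleCat.{u} R) : Prop :=
  ∃ T : ModuleCat.{u} R, IsTranspose R M T ∧ IsSyzygyOf R T L

/-- `M` is horizontally linked, i.e. `M ≅ λλM`. -/
def IsHorizontallyLinked (M : ModuleCat.{u} R) : Prop :=
  ∃ L L2 : ModuleCat.{u} R, IsLambda R M L ∧ IsLambda R L L2 ∧
    Nonempty (↥M ≃ₗ[R] ↥L2)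

/-- `M` is stable: it has no non-zero projective direct summand. -/
def IsStable (M : ModuleCat.{u} R) : Prop :=
  ∀ (P N : ModuleCat.{u} R), Module.Projective R ↥P →
    Nonempty (↥M ≃ₗ[R] (↥P × ↥N)) → Subsingleton ↥P

/-- `N` belongs to the Auslander class `A_C`. -/
def MemAuslanderClass (C N : ModuleCat.{u} R) : Prop :=
  Function.Bijective (TensorProduct.mk R ↥N ↥C) ∧
  (∀ i : ℕ, 0 < i → Subsingleton (TorM R C N i)) ∧
  (∀ i : ℕ, 0 < i → Subsingleton
    (ExtM R C (ModuleCat.of R (↥N ⊗[R] ↥C)) i))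

/-- `R` is semiperfect: every finite `R`-module has a projective cover. -/
def IsSemiperfectRing : Prop :=
  ∀ M : ModuleCat.{u} R, Module.Finite R ↥M →
    ∃ (P : ModuleCat.{u} R) (π : ↥P →ₗ[R] ↥M),
      Module.Finite R ↥P ∧ IsProjectiveCover R π

/-- Depth over a local ring, via Ext from the residue field. -/
def rdepth [IsLocalRing R] (M : ModuleCat.{u} R) : ℕ∞ :=
  sInf ((fun i : ℕ => (i : ℕ∞)) ''
    {i | ¬ Subsingleton
      (ExtM R (ModuleCat.of R (IsLocalRing.ResidueField R)) M i)})

/-- Projective dimension at most `n`. -/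
def pdimLE : ℕ → ModuleCat.{u} R → Prop
  | 0, M => Module.Projective R ↥M
  | n+1, M => ∃ (X K : ModuleCat.{u} R) (f : ↥K →ₗ[R] ↥X) (g : ↥X →ₗ[R] ↥M),
      Function.Injective f ∧ Function.Surjective g ∧
      LinearMap.ker g = LinearMap.range f ∧
      Module.Projective R ↥X ∧ pdimLE n K

/-- Projective dimension, as an element of `ℕ∞`. -/
def pdim (M : ModuleCat.{u} R) : ℕ∞ :=
  sInf ((fun n : ℕ => (n : ℕ∞)) '' {n | pdimLE R n M})

/-- `M` is `C`-`k`-torsionless. -/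
def IsCkTorsionless (C M : ModuleCat.{u} R) (k : ℕ) : Prop :=
  k = 0 ∨ ∀ T : ModuleCat.{u} R, IsTransposeC R C M T →
    ∀ i : ℕ, 1 ≤ i → i ≤ k → Subsingleton (ExtM R T C i)

/-- `M` is a `C`-syzygy: it embeds into `P ⊗_R C` with `P` finite projective. -/
def IsCSyzygy (C M : ModuleCat.{u} R) : Prop :=
  ∃ (P : ModuleCat.{u} R), Module.Finite R ↥P ∧ Module.Projective R ↥P ∧
    ∃ f : ↥M →ₗ[R] (↥P ⊗[R] ↥C), Function.Injective f


/-- There is an exact sequence `0 → N → X_k → ⋯ → X_1 → M → 0` of finite `R`-modules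
with `Ext_R^i(X_j, C) = 0` for all `i > 0` and all `j`. -/
def ExtVanishingChain (C : ModuleCat.{u} R) : ℕ → ModuleCat.{u} R → ModuleCat.{u} R → Prop
  | 0, N, M => Nonempty (↥N ≃ₗ[R] ↥M)
  | k+1, N, M => ∃ (X K : ModuleCat.{u} R) (f : ↥K →ₗ[R] ↥X) (g : ↥X →ₗ[R] ↥M),
      Function.Injective f ∧ Function.Surjective g ∧
      LinearMap.ker g = LinearMap.range f ∧
      Module.Finite R ↥X ∧ (∀ i : ℕ, 0 < i → Subsingleton (ExtM R X C i)) ∧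
      ExtVanishingChain C k N K


section Bridge

open Abelian Limits CochainComplex HomComplex

lemma extMk_zero_iff0 {X Y : ModuleCat.{u} R} (P : ProjectiveResolution X)
    (f : P.complex.X 0 ⟶ Y) (hf : P.complex.d 1 0 ≫ f = 0) :
    P.extMk f 1 rfl hf = 0 ↔ f = 0 := by
  simp only [← P.extEquivCohomologyClass.apply_eq_iff_eq,
    ProjectiveResolution.extEquivCohomologyClass_extMk,
    ProjectiveResolution.extEquivCohomologyClass_zero,
    CohomologyClass.mk_eq_zero_iff]
  rw [Cocycle.toSingleMk_mem_coboundaries_iff _ _ _ _ _ (1) (by simp)]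
  have hz : IsZero (P.cochainComplex.X 1) := CochainComplex.isZero_of_isStrictlyLE _ 0 _
  constructor
  · rintro ⟨g, hg⟩
    rw [hz.eq_of_src g 0, comp_zero] at hg
    rw [← cancel_epi (P.cochainComplexXIso (-((0:ℕ):ℤ)) 0 rfl).hom]
    simpa using hg.symm
  · rintro rfl
    exact ⟨0, by simp⟩

lemma smul_extMk {X Y : ModuleCat.{u} R} (P : ProjectiveResolution X) (r : R) {n : ℕ}
    (f : P.complex.X n ⟶ Y) (hf : P.complex.d (n+1) n ≫ f = 0)
    (hf' : P.complex.d (n+1) n ≫ (r • f) = 0) :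
    P.extMk (r • f) (n+1) rfl hf' = r • P.extMk f (n+1) rfl hf := by
  rw [Abelian.Ext.smul_eq_comp_mk₀, P.extMk_comp_mk₀]
  simp

def bridgeAux {X Y : ModuleCat.{u} R} (P : ProjectiveResolution X) (j n : ℕ) :
    LinearMap.ker ((P.complex.linearYonedaObj R Y).sc' j n (n+1)).g.hom →ₗ[R]
      Abelian.Ext X Y n where
  toFun f := P.extMk (f.1 : P.complex.X n ⟶ Y) (n+1) rfl f.2
  map_add' f g := (P.add_extMk _ _ _ _ f.2 g.2).symm
  map_smul' r f := smul_extMk R P r _ f.2 _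

lemma bridge_general {X Y : ModuleCat.{u} R} (P : ProjectiveResolution X) (j n : ℕ)
    (hj : (ComplexShape.up ℕ).prev n = j)
    (h : ∀ (f : P.complex.X n ⟶ Y) (hf : P.complex.d (n+1) n ≫ f = 0),
      P.extMk f (n+1) rfl hf = 0 ↔ ∃ g : P.complex.X j ⟶ Y, P.complex.d n j ≫ g = f) :
    Nonempty (ExtM R X Y n ≃ₗ[R] Abelian.Ext X Y n) := by
  let K := P.complex.linearYonedaObj R Y
  let S := K.sc' j n (n+1)
  have e1 : ExtM R X Y n ≅ S.homology :=
    P.isoExt n Y ≪≫ ShortComplex.homologyMapIso (K.isoSc' j n (n+1) hj (by simp))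
  have e2 := e1 ≪≫ S.moduleCatHomologyIso
  have hs : Function.Surjective (bridgeAux R (Y := Y) P j n) := by
    intro α
    obtain ⟨f, hf, rfl⟩ := P.extMk_surjective α (n+1) rfl
    exact ⟨⟨f, hf⟩, rfl⟩
  have hk : LinearMap.range S.moduleCatToCycles = LinearMap.ker (bridgeAux R (Y := Y) P j n) := ?_
  · have e3 : S.moduleCatLeftHomologyData.H ≃ₗ[R] Abelian.Ext X Y n :=
      (Submodule.quotEquivOfEq _ _ hk).trans
        ((bridgeAux R (Y := Y) P j n).quotKerEquivOfSurjective hs)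
    exact ⟨e2.toLinearEquiv.trans e3⟩
  ext ⟨f, hf⟩
  rw [LinearMap.mem_ker]
  refine Iff.trans ?_ (h f hf).symm
  constructor
  · rintro ⟨g, hg⟩
    exact ⟨g, congrArg Subtype.val hg⟩
  · rintro ⟨g, hg⟩
    exact ⟨g, Subtype.ext hg⟩

lemma bridge (X Y : ModuleCat.{u} R) (n : ℕ) :
    Nonempty (ExtM R X Y n ≃ₗ[R] Abelian.Ext X Y n) := by
  let P := ProjectiveResolution.of X
  cases n with
  | zero =>
    refine bridge_general R P 0 0 (by simp) fun f hf => ?_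
    rw [extMk_zero_iff0]
    constructor
    · rintro rfl; exact ⟨0, by simp⟩
    · rintro ⟨g, rfl⟩; simp
  | succ n =>
    exact bridge_general R P n (n+1) (by simp) fun f hf => P.extMk_eq_zero_iff f _ rfl hf n rfl

end Bridge
/-- Short exact sequences of modules. -/
structure SES {A B X : ModuleCat.{u} R} (f : ↥A →ₗ[R] ↥B) (g : ↥B →ₗ[R] ↥X) : Prop where
  inj : Function.Injective f
  surj : Function.Surjective g
  ex : LinearMap.ker g = LinearMap.range f

section Toolkit

variable {R}

lemma SES.comp_zero {A B X : ModuleCat.{u} R} {f : ↥A →ₗ[R] ↥B} {g : ↥B →ₗ[R] ↥X}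
    (h : SES R f g) (a : A) : g (f a) = 0 := by
  have : f a ∈ LinearMap.ker g := by rw [h.ex]; exact ⟨a, rfl⟩
  exact this

lemma SES.lift {A B X : ModuleCat.{u} R} {f : ↥A →ₗ[R] ↥B} {g : ↥B →ₗ[R] ↥X}
    (h : SES R f g) (b : B) (hb : g b = 0) : ∃ a, f a = b := by
  have : b ∈ LinearMap.ker g := hb
  rw [h.ex] at this
  exact this

/-- The short complex of a short exact sequence. -/
abbrev SES.sc {A B X : ModuleCat.{u} R} {f : ↥A →ₗ[R] ↥B} {g : ↥B →ₗ[R] ↥X}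
    (h : SES R f g) : ShortComplex (ModuleCat.{u} R) :=
  ShortComplex.mk (ModuleCat.ofHom f) (ModuleCat.ofHom g) (by
    ext a; exact h.comp_zero a)

lemma SES.shortExact {A B X : ModuleCat.{u} R} {f : ↥A →ₗ[R] ↥B} {g : ↥B →ₗ[R] ↥X}
    (h : SES R f g) : h.sc.ShortExact := by
  refine ModuleCat.shortComplex_shortExact h.sc ?_ h.inj h.surj
  intro b
  constructor
  · exact fun hb => h.lift b hb
  · rintro ⟨a, rfl⟩; exact h.comp_zero a

lemma sub_iff (X Y : ModuleCat.{u} R) (n : ℕ) :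
    Subsingleton (ExtM R X Y n) ↔ Subsingleton (Abelian.Ext X Y n) :=
  (bridge R X Y n).some.toEquiv.subsingleton_congr

variable {A B X : ModuleCat.{u} R} {f : ↥A →ₗ[R] ↥B} {g : ↥B →ₗ[R] ↥X} (N : ModuleCat.{u} R)

lemma SES.sub_left (h : SES R f g) {i : ℕ} (h1 : Subsingleton (ExtM R B N i))
    (h2 : Subsingleton (ExtM R X N (i+1))) : Subsingleton (ExtM R A N i) := by
  rw [sub_iff] at *
  refine subsingleton_of_forall_eq 0 fun x => ?_
  obtain ⟨y, rfl⟩ := Abelian.Ext.contravariant_sequence_exact₁ h.shortExact N x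
    (add_comm 1 i) (h2.elim _ _)
  rw [h1.elim y 0, Abelian.Ext.comp_zero]

lemma SES.sub_mid (h : SES R f g) {i : ℕ} (h1 : Subsingleton (ExtM R X N i))
    (h2 : Subsingleton (ExtM R A N i)) : Subsingleton (ExtM R B N i) := by
  rw [sub_iff] at *
  refine subsingleton_of_forall_eq 0 fun x => ?_
  obtain ⟨y, rfl⟩ := Abelian.Ext.contravariant_sequence_exact₂ h.shortExact N x (h2.elim _ _)
  rw [h1.elim y 0, Abelian.Ext.comp_zero]

lemma SES.sub_right (h : SES R f g) {i : ℕ} (h1 : Subsingleton (ExtM R A N i))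
    (h2 : Subsingleton (ExtM R B N (i+1))) : Subsingleton (ExtM R X N (i+1)) := by
  rw [sub_iff] at *
  refine subsingleton_of_forall_eq 0 fun x => ?_
  obtain ⟨y, rfl⟩ := Abelian.Ext.contravariant_sequence_exact₃ h.shortExact N x (h2.elim _ _)
    (add_comm 1 i)
  rw [h1.elim y 0, Abelian.Ext.comp_zero]

lemma SES.shift (h : SES R f g) {i : ℕ} (h1 : Subsingleton (ExtM R B N i))
    (h2 : Subsingleton (ExtM R B N (i+1))) :
    Nonempty (ExtM R A N i ≃ₗ[R] ExtM R X N (i+1)) := by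
  rw [sub_iff] at h1 h2
  let δ : Abelian.Ext A N i →ₗ[R] Abelian.Ext X N (i+1) :=
    h.shortExact.extClass.precompOfLinear R N (add_comm 1 i)
  have hb : Function.Bijective δ := by
    constructor
    · refine (injective_iff_map_eq_zero δ).2 fun x hx => ?_
      obtain ⟨y, rfl⟩ := Abelian.Ext.contravariant_sequence_exact₁ h.shortExact N x
        (add_comm 1 i) hx
      rw [h1.elim y 0, Abelian.Ext.comp_zero]
    · intro x
      exact Abelian.Ext.contravariant_sequence_exact₃ h.shortExact N x (h2.elim _ _)
        (add_comm 1 i)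
  exact ⟨(bridge R A N i).some.trans
    ((LinearEquiv.ofBijective δ hb).trans (bridge R X N (i+1)).some.symm)⟩

lemma SES.iso_left (h : SES R f g) {i : ℕ} (h1 : Subsingleton (ExtM R X N i))
    (h2 : Subsingleton (ExtM R X N (i+1))) :
    Nonempty (ExtM R B N i ≃ₗ[R] ExtM R A N i) := by
  rw [sub_iff] at h1 h2
  let δ : Abelian.Ext B N i →ₗ[R] Abelian.Ext A N i :=
    (Abelian.Ext.mk₀ (ModuleCat.ofHom f)).precompOfLinear R N (zero_add i)
  have hb : Function.Bijective δ := by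
    constructor
    · refine (injective_iff_map_eq_zero δ).2 fun x hx => ?_
      obtain ⟨y, rfl⟩ := Abelian.Ext.contravariant_sequence_exact₂ h.shortExact N x hx
      rw [h1.elim y 0, Abelian.Ext.comp_zero]
    · intro x
      exact Abelian.Ext.contravariant_sequence_exact₁ h.shortExact N x (add_comm 1 i)
        (h2.elim _ _)
  exact ⟨(bridge R B N i).some.trans
    ((LinearEquiv.ofBijective δ hb).trans (bridge R A N i).some.symm)⟩

lemma ext_zero_equiv (X N : ModuleCat.{u} R) :
    Nonempty (ExtM R X N 0 ≃ₗ[R] (↥X →ₗ[R] ↥N)) :=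
  ⟨(bridge R X N 0).some.trans
    ((Abelian.Ext.linearEquiv₀ (R := R)).trans ModuleCat.homLinearEquiv)⟩

/-- connecting map `Hom(A,N) → Ext^1(X,N)` with kernel the image of `Hom(B,N)`. -/
lemma SES.conn (h : SES R f g) : ∃ δ : (↥A →ₗ[R] ↥N) →ₗ[R] ExtM R X N 1,
    LinearMap.ker δ = LinearMap.range (LinearMap.lcomp R ↥N f) ∧
    (Subsingleton (ExtM R B N 1) → Function.Surjective δ) := by
  let δ : Abelian.Ext A N 0 →ₗ[R] Abelian.Ext X N 1 :=
    h.shortExact.extClass.precompOfLinear R N rfl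
  let e : (↥A →ₗ[R] ↥N) ≃ₗ[R] Abelian.Ext A N 0 :=
    ((Abelian.Ext.linearEquiv₀ (R := R)).trans ModuleCat.homLinearEquiv).symm
  have he : ∀ φ, e φ = Abelian.Ext.mk₀ (ModuleCat.ofHom φ) := fun φ => rfl
  let b := (bridge R X N 1).some.symm
  refine ⟨b.toLinearMap ∘ₗ δ ∘ₗ e.toLinearMap, ?_, fun hB => ?_⟩
  · ext φ
    have h0 : (b.toLinearMap ∘ₗ δ ∘ₗ e.toLinearMap) φ = 0 ↔ δ (e φ) = 0 := by simp
    rw [LinearMap.mem_ker, h0, he]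
    constructor
    · intro hx
      obtain ⟨y, hy⟩ := Abelian.Ext.contravariant_sequence_exact₁ h.shortExact N _ (add_zero 1) hx
      obtain ⟨ψ, rfl⟩ := (Abelian.Ext.mk₀_bijective _ _).2 y
      rw [Abelian.Ext.mk₀_comp_mk₀] at hy
      have := (Abelian.Ext.mk₀_bijective _ _).1 hy
      exact ⟨ψ.hom, congrArg ModuleCat.Hom.hom this⟩
    · rintro ⟨ψ, rfl⟩
      have : Abelian.Ext.mk₀ (ModuleCat.ofHom (LinearMap.lcomp R (↥N) f ψ)) =
        (Abelian.Ext.mk₀ h.sc.f).comp (Abelian.Ext.mk₀ (ModuleCat.ofHom ψ)) (zero_add 0) := by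
        rw [Abelian.Ext.mk₀_comp_mk₀]; rfl
      rw [this]
      change h.shortExact.extClass.comp _ (add_zero 1) = 0
      rw [← Abelian.Ext.comp_assoc (h₁₂ := add_zero 1) (h₂₃ := add_zero 0) (h := rfl)]
      rw [h.shortExact.extClass_comp, Abelian.Ext.zero_comp]
  · rw [sub_iff] at hB
    have : Function.Surjective δ := fun x =>
      Abelian.Ext.contravariant_sequence_exact₃ h.shortExact N x (hB.elim _ _) rfl
    exact b.surjective.comp (this.comp e.surjective)

lemma SES.extend (h : SES R f g) (h1 : Subsingleton (ExtM R X N 1)) (φ : ↥A →ₗ[R] ↥N) :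
    ∃ ψ : ↥B →ₗ[R] ↥N, ψ ∘ₗ f = φ := by
  obtain ⟨δ, h2, -⟩ := h.conn N
  have : φ ∈ LinearMap.ker δ := h1.elim _ _
  rw [h2] at this
  exact this

lemma SES.sub_one (h : SES R f g) (h1 : Subsingleton (ExtM R B N 1))
    (h2 : ∀ φ : ↥A →ₗ[R] ↥N, ∃ ψ : ↥B →ₗ[R] ↥N, ψ ∘ₗ f = φ) :
    Subsingleton (ExtM R X N 1) := by
  obtain ⟨δ, h3, h4⟩ := h.conn N
  refine subsingleton_of_forall_eq 0 fun x => ?_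
  obtain ⟨φ, rfl⟩ := h4 h1 x
  change φ ∈ LinearMap.ker δ
  rw [h3]
  exact h2 φ

lemma ext_iso (e : ↥A ≃ₗ[R] ↥B) (i : ℕ) : Nonempty (ExtM R A N i ≃ₗ[R] ExtM R B N i) :=
  ⟨((((Ext R (ModuleCat.{u} R) i).mapIso e.toModuleIso.op).app N).toLinearEquiv).symm⟩

lemma ext_sub_iso (e : ↥A ≃ₗ[R] ↥B) {i : ℕ} (h : Subsingleton (ExtM R A N i)) :
    Subsingleton (ExtM R B N i) :=
  (ext_iso N e i).some.toEquiv.subsingleton_congr.1 h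

lemma ext_proj [Module.Projective R ↥A] {i : ℕ} (hi : 0 < i) : Subsingleton (ExtM R A N i) := by
  obtain ⟨j, rfl⟩ : ∃ j, i = j + 1 := ⟨i - 1, by omega⟩
  rw [sub_iff]
  have : Projective A := (IsProjective.iff_projective (R := R) (P := ↥A)).1 inferInstance
  exact Abelian.Ext.subsingleton_of_projective _ _ _

lemma ext_retract (s : ↥A →ₗ[R] ↥B) (r : ↥B →ₗ[R] ↥A) (hrs : r ∘ₗ s = LinearMap.id) {i : ℕ}
    (h : Subsingleton (ExtM R B N i)) : Subsingleton (ExtM R A N i) := by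
  rw [sub_iff] at *
  refine subsingleton_of_forall_eq 0 fun x => ?_
  have h1 : (ModuleCat.ofHom s) ≫ (ModuleCat.ofHom r) = 𝟙 A := by
    rw [← ModuleCat.ofHom_comp, hrs]; rfl
  rw [← Abelian.Ext.mk₀_id_comp x, ← h1, ← Abelian.Ext.mk₀_comp_mk₀_assoc,
    h.elim ((Abelian.Ext.mk₀ (ModuleCat.ofHom r)).comp x (zero_add i)) 0, Abelian.Ext.comp_zero]

lemma ext_finite [IsNoetherianRing R] [Module.Finite R ↥A] [Module.Finite R ↥N] (i : ℕ) :
    Module.Finite R (ExtM R A N i) :=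
  Module.Finite.equiv (bridge R A N i).some.symm

end Toolkit

section Reflexive

variable {R}

/-- The `C`-dual as an object. -/
abbrev DD (C X : ModuleCat.{u} R) : ModuleCat.{u} R := ModuleCat.of R (↥X →ₗ[R] ↥C)

/-- The dual of a map. -/
abbrev dm (C : ModuleCat.{u} R) {A B : ModuleCat.{u} R} (f : ↥A →ₗ[R] ↥B) :
    ↥(DD C B) →ₗ[R] ↥(DD C A) := LinearMap.lcomp R ↥C f

lemma dm_apply (C : ModuleCat.{u} R) {A B : ModuleCat.{u} R} (f : ↥A →ₗ[R] ↥B)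
    (φ : ↥B →ₗ[R] ↥C) (a : A) : (dm C f φ : ↥A →ₗ[R] ↥C) a = φ (f a) := rfl

variable {C : ModuleCat.{u} R} {A B X : ModuleCat.{u} R} {f : ↥A →ₗ[R] ↥B} {g : ↥B →ₗ[R] ↥X}

lemma bid_apply (x : X) (φ : ↥X →ₗ[R] ↥C) : bidualityMap R C X x φ = φ x := rfl

lemma bid_nat (f : ↥A →ₗ[R] ↥B) (a : A) :
    dm C (dm C f) (bidualityMap R C A a) = bidualityMap R C B (f a) := rfl

lemma SES.dual (h : SES R f g) (h1 : Subsingleton (ExtM R X C 1)) :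
    SES R (dm C g) (dm C f) where
  inj := by
    intro φ ψ hφ
    refine LinearMap.ext fun x => ?_
    obtain ⟨b, rfl⟩ := h.surj x
    exact LinearMap.congr_fun hφ b
  surj := fun φ => h.extend C h1 φ
  ex := by
    ext φ
    constructor
    · intro hφ
      have hφ' : ∀ a, φ (f a) = 0 := fun a => LinearMap.congr_fun hφ a
      have hk : LinearMap.ker g ≤ LinearMap.ker φ := by
        rw [h.ex]; rintro _ ⟨a, rfl⟩; exact hφ' a
      choose s hs using h.surj
      refine ⟨{ toFun := fun x => φ (s x), map_add' := ?_, map_smul' := ?_ }, ?_⟩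
      · intro x y
        have : s (x + y) - (s x + s y) ∈ LinearMap.ker φ := hk (by simp [hs])
        rw [LinearMap.mem_ker, map_sub, map_add, sub_eq_zero] at this
        exact this
      · intro r x
        have : s (r • x) - (r • s x) ∈ LinearMap.ker φ := hk (by simp [hs])
        rw [LinearMap.mem_ker, map_sub, map_smul, sub_eq_zero] at this
        exact this
      · refine LinearMap.ext fun b => ?_
        have : s (g b) - b ∈ LinearMap.ker φ := hk (by simp [hs])
        rw [LinearMap.mem_ker, map_sub, sub_eq_zero] at this
        exact this
    · rintro ⟨ψ, rfl⟩
      refine LinearMap.ext fun a => ?_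
      change ψ (g (f a)) = 0
      rw [h.comp_zero, map_zero]

lemma TR.retract (s : ↥A →ₗ[R] ↥B) (r : ↥B →ₗ[R] ↥A) (hrs : r ∘ₗ s = LinearMap.id)
    (h : IsTotallyCReflexive R C B) : IsTotallyCReflexive R C A := by
  obtain ⟨h1, h2, h3, h4⟩ := h
  have hrs' : ∀ a, r (s a) = a := fun a => LinearMap.congr_fun hrs a
  refine ⟨Module.Finite.of_surjective r fun a => ⟨s a, hrs' a⟩, ⟨?_, ?_⟩,
    fun i hi => ext_retract C s r hrs (h3 i hi),
    fun i hi => ext_retract (A := DD C A) (B := DD C B) C (dm C r) (dm C s) ?_ (h4 i hi)⟩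
  · intro a b hab
    rw [← hrs' a, ← hrs' b, h2.1 (a₁ := s a) (a₂ := s b)]
    rw [← bid_nat, ← bid_nat, hab]
  · intro ξ
    obtain ⟨b, hb⟩ := h2.2 (dm C (dm C s) ξ)
    refine ⟨r b, ?_⟩
    rw [← bid_nat, hb]
    refine LinearMap.ext fun φ => ?_
    change ξ ((φ ∘ₗ r) ∘ₗ s) = ξ φ
    rw [LinearMap.comp_assoc, hrs, LinearMap.comp_id]
  · refine LinearMap.ext fun φ => ?_
    change (φ ∘ₗ r) ∘ₗ s = φ
    rw [LinearMap.comp_assoc, hrs, LinearMap.comp_id]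

lemma TR.iso (e : ↥A ≃ₗ[R] ↥B) (h : IsTotallyCReflexive R C B) : IsTotallyCReflexive R C A :=
  TR.retract e.toLinearMap e.symm.toLinearMap (by ext; simp) h

lemma SES.finite_mid [IsNoetherianRing R] (h : SES R f g) (h1 : Module.Finite R ↥A)
    (h2 : Module.Finite R ↥X) : Module.Finite R ↥B := by
  have := isNoetherian_of_range_eq_ker f g h.ex.symm
  infer_instance

lemma TR.ext [IsNoetherianRing R] (h : SES R f g) (hA : IsTotallyCReflexive R C A)
    (hX : IsTotallyCReflexive R C X) : IsTotallyCReflexive R C B := by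
  have hd := h.dual (C := C) (hX.2.2.1 1 one_pos)
  have hdd := hd.dual (C := C) (hA.2.2.2 1 one_pos)
  refine ⟨h.finite_mid hA.1 hX.1, ⟨?_, ?_⟩, fun i hi => h.sub_mid C (hX.2.2.1 i hi) (hA.2.2.1 i hi),
    fun i hi => hd.sub_mid C (hA.2.2.2 i hi) (hX.2.2.2 i hi)⟩
  · refine (injective_iff_map_eq_zero _).2 fun b hb => ?_
    have hg : g b = 0 := hX.2.1.1 (by rw [← bid_nat, hb, map_zero, map_zero])
    obtain ⟨a, rfl⟩ := h.lift b hg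
    rw [← bid_nat] at hb
    have h0 := hdd.inj (hb.trans (map_zero _).symm)
    rw [hA.2.1.1 (h0.trans (map_zero _).symm), map_zero]
  · intro ξ
    obtain ⟨x, hx⟩ := hX.2.1.2 (dm C (dm C g) ξ)
    obtain ⟨b, rfl⟩ := h.surj x
    obtain ⟨η, hη⟩ := hdd.lift (ξ - bidualityMap R C B b) (by
      rw [map_sub, bid_nat, hx]; exact sub_self _)
    obtain ⟨a, rfl⟩ := hA.2.1.2 η
    rw [bid_nat] at hη
    refine ⟨f a + b, ?_⟩
    rw [map_add, hη]
    exact sub_add_cancel _ _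

lemma TR.ker [IsNoetherianRing R] (h : SES R f g) (hB : IsTotallyCReflexive R C B)
    (hX : IsTotallyCReflexive R C X) : IsTotallyCReflexive R C A := by
  have hd := h.dual (C := C) (hX.2.2.1 1 one_pos)
  have h1 : Subsingleton (ExtM R (DD C A) C 1) := by
    refine hd.sub_one C (hB.2.2.2 1 one_pos) fun φ => ?_
    obtain ⟨x, rfl⟩ := hX.2.1.2 φ
    obtain ⟨b, rfl⟩ := h.surj x
    exact ⟨bidualityMap R C B b, rfl⟩
  have hdd := hd.dual (C := C) h1
  have := hB.1
  refine ⟨Module.Finite.of_injective f h.inj, ⟨?_, ?_⟩,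
    fun i hi => h.sub_left C (hB.2.2.1 i hi) (hX.2.2.1 (i+1) (Nat.succ_pos _)),
    fun i hi => ?_⟩
  · refine (injective_iff_map_eq_zero _).2 fun a ha => ?_
    refine h.inj (hB.2.1.1 ?_)
    rw [← bid_nat, ha, map_zero, map_zero, map_zero]
  · intro ξ
    obtain ⟨b, hb⟩ := hB.2.1.2 (dm C (dm C f) ξ)
    have hg : g b = 0 := hX.2.1.1 (by
      rw [← bid_nat, hb, map_zero]; exact hdd.comp_zero ξ)
    obtain ⟨a, rfl⟩ := h.lift b hg
    refine ⟨a, hdd.inj ?_⟩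
    rw [bid_nat, hb]
  · obtain _ | _ | i := i
    · omega
    · exact h1
    · exact hd.sub_right C (hX.2.2.2 (i+1) (Nat.succ_pos _)) (hB.2.2.2 (i+2) (Nat.succ_pos _))

lemma TR.dual [IsNoetherianRing R] [Module.Finite R ↥C] (h : IsTotallyCReflexive R C A) :
    IsTotallyCReflexive R C (DD C A) := by
  have hf := h.1
  let e : ↥A ≃ₗ[R] ↥(DD C (DD C A)) := LinearEquiv.ofBijective _ h.2.1
  refine ⟨inferInstanceAs (Module.Finite R (↥A →ₗ[R] ↥C)), ⟨?_, ?_⟩, h.2.2.2,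
    fun i hi => ext_sub_iso C e (h.2.2.1 i hi)⟩
  · refine (injective_iff_map_eq_zero _).2 fun φ hφ => LinearMap.ext fun a => ?_
    exact LinearMap.congr_fun hφ (bidualityMap R C A a)
  · intro ξ
    refine ⟨ξ ∘ₗ e.toLinearMap, LinearMap.ext fun η => ?_⟩
    obtain ⟨a, rfl⟩ := h.2.1.2 η
    rfl

lemma TR.ring (hC : IsSemidualizing R C) : IsTotallyCReflexive R C (ModuleCat.of R R) := by
  let e : ↥(DD C (ModuleCat.of R R)) ≃ₗ[R] ↥C := LinearMap.ringLmapEquivSelf R R ↥C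
  have he : ∀ φ, e φ = φ (1 : R) := fun φ => rfl
  refine ⟨inferInstanceAs (Module.Finite R R), ⟨?_, ?_⟩,
    fun i hi => ?_, fun i hi => ext_sub_iso C e.symm (hC.2.2 i hi)⟩
  · intro r s hrs
    refine hC.2.1.1 (LinearMap.ext fun c => ?_)
    have := LinearMap.congr_fun hrs (LinearMap.toSpanSingleton R ↥C c)
    exact this
  · intro ξ
    obtain ⟨r, hr⟩ := hC.2.1.2 (ξ ∘ₗ e.symm.toLinearMap)
    refine ⟨r, LinearMap.ext fun φ => ?_⟩
    have h1 := LinearMap.congr_fun hr (e φ)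
    have h2 : ξ φ = r • (e φ) := by simpa using h1.symm
    rw [h2, he, bid_apply, ← map_smul, smul_eq_mul, mul_one]
  · have : Module.Projective R ↥(ModuleCat.of R R) := inferInstanceAs (Module.Projective R R)
    exact ext_proj C hi

lemma TR.sub (hA : Subsingleton ↥A) : IsTotallyCReflexive R C A := by
  have : Module.Projective R ↥A := inferInstance
  have h1 : Subsingleton ↥(DD C A) :=
    ⟨fun a b => LinearMap.ext fun x => by rw [Subsingleton.elim x 0, map_zero, map_zero]⟩
  have : Module.Projective R ↥(DD C A) := inferInstance
  refine ⟨inferInstance, ⟨fun a b _ => hA.elim a b, fun ξ => ⟨0, LinearMap.ext fun φ => ?_⟩⟩,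
    fun i hi => ext_proj C hi, fun i hi => ext_proj (A := DD C A) C hi⟩
  rw [h1.elim φ 0, map_zero, map_zero]

lemma SES.prod (A X : ModuleCat.{u} R) : SES R (A := A) (B := ModuleCat.of R (↥A × ↥X)) (X := X)
    (LinearMap.inl R ↥A ↥X) (LinearMap.snd R ↥A ↥X) :=
  ⟨LinearMap.inl_injective, LinearMap.snd_surjective, by
    rw [LinearMap.range_inl]⟩

lemma TR.free [IsNoetherianRing R] (hC : IsSemidualizing R C) (n : ℕ) :
    IsTotallyCReflexive R C (ModuleCat.of R (Fin n → R)) := by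
  induction n with
  | zero => exact TR.sub (inferInstanceAs (Subsingleton (Fin 0 → R)))
  | succ n ih =>
    have h := TR.ext (SES.prod (ModuleCat.of R R) (ModuleCat.of R (Fin n → R))) (TR.ring hC) ih
    refine TR.iso ?_ h
    exact (Fin.consLinearEquiv R (fun _ : Fin (n+1) => R)).symm

lemma TR.proj [IsNoetherianRing R] (hC : IsSemidualizing R C) [Module.Finite R ↥A]
    [Module.Projective R ↥A] : IsTotallyCReflexive R C A := by
  obtain ⟨n, p, s, hp, hs, hps⟩ := Module.Finite.exists_comp_eq_id_of_projective R ↥A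
  exact TR.retract (B := ModuleCat.of R (Fin n → R)) s p hps (TR.free hC n)

/-- Every finite module is covered by a finite projective module, with finite kernel. -/
lemma exists_proj_cover [IsNoetherianRing R] (M : ModuleCat.{u} R)
    (hM : Module.Finite R ↥M) : ∃ (F : ModuleCat.{u} R) (g : ↥F →ₗ[R] ↥M),
      Module.Finite R ↥F ∧ Module.Projective R ↥F ∧ Function.Surjective g := by
  obtain ⟨n, g, hg⟩ := Module.Finite.exists_fin' R ↥M
  exact ⟨ModuleCat.of R (Fin n → R), g, inferInstanceAs (Module.Finite R (Fin n → R)),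
    inferInstanceAs (Module.Projective R (Fin n → R)), hg⟩

/-- The kernel as an object. -/
abbrev KK {A B : ModuleCat.{u} R} (f : ↥A →ₗ[R] ↥B) : ModuleCat.{u} R :=
  ModuleCat.of R (LinearMap.ker f)

lemma SES.ofSurj {A B : ModuleCat.{u} R} (f : ↥A →ₗ[R] ↥B) (hf : Function.Surjective f) :
    SES R (A := KK f) (LinearMap.ker f).subtype f :=
  ⟨Subtype.val_injective, hf, by simp⟩

lemma SES.kerEquiv (h : SES R f g) : Nonempty (↥A ≃ₗ[R] ↥(KK g)) :=
  ⟨(LinearEquiv.ofInjective f h.inj).trans (LinearEquiv.ofEq _ _ h.ex.symm)⟩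

end Reflexive

section GCdim

variable {R}
variable {C : ModuleCat.{u} R} {A B X : ModuleCat.{u} R} {f : ↥A →ₗ[R] ↥B} {g : ↥B →ₗ[R] ↥X}

lemma gc.iso (e : ↥A ≃ₗ[R] ↥B) {n : ℕ} (h : gcdimLE R C n B) : gcdimLE R C n A := by
  cases n with
  | zero => exact TR.iso e h
  | succ n =>
    obtain ⟨X, K, k, x, h1, h2, h3, h4, h5⟩ := h
    exact ⟨X, K, k, e.symm.toLinearMap ∘ₗ x, h1, e.symm.surjective.comp h2, by
      rw [← h3]; ext; simp, h4, h5⟩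

lemma gc.cons {n : ℕ} (h : SES R f g) (hB : IsTotallyCReflexive R C B) (hA : gcdimLE R C n A) :
    gcdimLE R C (n+1) X := ⟨B, A, f, g, h.inj, h.surj, h.ex, hB, hA⟩

lemma gc.uncons {n : ℕ} (hX : gcdimLE R C (n+1) X) :
    ∃ (B A : ModuleCat.{u} R) (f : ↥A →ₗ[R] ↥B) (g : ↥B →ₗ[R] ↥X), SES R f g ∧
      IsTotallyCReflexive R C B ∧ gcdimLE R C n A := by
  obtain ⟨B, A, f, g, h1, h2, h3, h4, h5⟩ := hX
  exact ⟨B, A, f, g, ⟨h1, h2, h3⟩, h4, h5⟩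

lemma gc.vanish {n : ℕ} : ∀ {M : ModuleCat.{u} R}, gcdimLE R C n M → ∀ i, n < i →
    Subsingleton (ExtM R M C i) := by
  induction n with
  | zero => exact fun h i hi => h.2.2.1 i hi
  | succ n ih =>
    intro M h i hi
    obtain ⟨B, A, f, g, h1, h2, h3⟩ := gc.uncons h
    obtain ⟨j, rfl⟩ : ∃ j, i = j + 1 := ⟨i - 1, by omega⟩
    exact h1.sub_right C (ih h3 j (by omega)) (h2.2.2.1 _ (by omega))

lemma gc.finite {n : ℕ} {M : ModuleCat.{u} R} (h : gcdimLE R C n M) : Module.Finite R ↥M := by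
  cases n with
  | zero => exact h.1
  | succ n =>
    obtain ⟨B, A, f, g, h1, h2, h3⟩ := gc.uncons h
    have := h2.1
    exact Module.Finite.of_surjective g h1.surj

lemma gc.ext [IsNoetherianRing R] (hC : IsSemidualizing R C) {j : ℕ} :
    ∀ {A B X : ModuleCat.{u} R} {f : ↥A →ₗ[R] ↥B} {g : ↥B →ₗ[R] ↥X}, SES R f g →
    gcdimLE R C j A → IsTotallyCReflexive R C X → gcdimLE R C j B := by
  induction j with
  | zero => exact fun h hA hX => TR.ext h hA hX
  | succ j ih =>
    intro A B Y f g h hA hY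
    obtain ⟨X, K, k, x, h1, h2, h3⟩ := gc.uncons hA
    obtain ⟨P, p, hP1, hP2, hp⟩ := exists_proj_cover Y hY.1
    obtain ⟨q, hq⟩ := Module.projective_lifting_property g p h.surj
    have hq' : ∀ a, g (q a) = p a := fun a => LinearMap.congr_fun hq a
    have hΩ : IsTotallyCReflexive R C (KK p) := TR.ker (SES.ofSurj p hp) (TR.proj hC) hY
    let XP : ModuleCat.{u} R := ModuleCat.of R (↥X × ↥P)
    have hXP : IsTotallyCReflexive R C XP := TR.ext (SES.prod X P) h2 (TR.proj hC)
    let w : ↥XP →ₗ[R] ↥B := LinearMap.coprod (f ∘ₗ x) q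
    have hw : ∀ a b, w (a, b) = f (x a) + q b := fun a b => LinearMap.coprod_apply (f ∘ₗ x) q (a, b)
    have hws : Function.Surjective w := by
      intro b
      obtain ⟨c, hc⟩ := hp (g b)
      obtain ⟨a, ha⟩ := h.lift (b - q c) (by rw [map_sub, hq', hc, sub_self])
      obtain ⟨y, rfl⟩ := h1.surj a
      exact ⟨(y, c), by rw [hw, ha]; abel⟩
    refine gc.cons (SES.ofSurj w hws) hXP ?_
    let α : ↥K →ₗ[R] ↥(KK w) := LinearMap.codRestrict _ (LinearMap.inl R ↥X ↥P ∘ₗ k) (fun c => by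
      change w (k c, 0) = 0
      rw [hw, h1.comp_zero, map_zero, map_zero, add_zero])
    let β : ↥(KK w) →ₗ[R] ↥(KK p) :=
      LinearMap.codRestrict _ (LinearMap.snd R ↥X ↥P ∘ₗ (LinearMap.ker w).subtype) (by
        rintro ⟨⟨a, b⟩, hab⟩
        change p b = 0
        rw [LinearMap.mem_ker, hw] at hab
        rw [← hq', ← zero_add (g (q b)), ← h.comp_zero (x a), ← map_add g, hab, map_zero, h.comp_zero])
    have hs : SES R α β := by
      refine ⟨?_, ?_, ?_⟩
      · intro a b hab
        exact h1.inj (congrArg (fun t => t.1.1) hab)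
      · rintro ⟨b, hb⟩
        obtain ⟨a, ha⟩ := h.lift (q b) ((hq' b).trans hb)
        obtain ⟨y, rfl⟩ := h1.surj a
        exact ⟨⟨(-y, b), by rw [LinearMap.mem_ker, hw, ← ha]; simp⟩, rfl⟩
      · ext ⟨⟨a, b⟩, hab⟩
        constructor
        · intro hb
          have hb : b = 0 := congrArg (fun t => t.1) hb
          subst hb
          rw [LinearMap.mem_ker, hw, map_zero, add_zero] at hab
          obtain ⟨c, hc⟩ := h1.lift a (h.inj (hab.trans (map_zero f).symm))
          exact ⟨c, Subtype.ext (Prod.ext hc rfl)⟩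
        · rintro ⟨c, hc⟩
          rw [← hc]
          rfl
    exact ih hs h3 hΩ

lemma gc.ker [IsNoetherianRing R] (h : SES R f g) {j : ℕ} (hB : gcdimLE R C j B)
    (hX : IsTotallyCReflexive R C X) : gcdimLE R C j A := by
  cases j with
  | zero => exact TR.ker h hB hX
  | succ j =>
    refine gc.iso h.kerEquiv.some ?_
    obtain ⟨Y, K, k, y, h1, h2, h3⟩ := gc.uncons hB
    let v : ↥Y →ₗ[R] ↥X := g ∘ₗ y
    have hv : IsTotallyCReflexive R C (KK v) :=
      TR.ker (SES.ofSurj v (h.surj.comp h1.surj)) h2 hX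
    let α : ↥K →ₗ[R] ↥(KK v) := LinearMap.codRestrict _ k (fun c => by
      change g (y (k c)) = 0
      rw [h1.comp_zero, map_zero])
    let β : ↥(KK v) →ₗ[R] ↥(KK g) :=
      LinearMap.codRestrict _ (y ∘ₗ (LinearMap.ker v).subtype) (fun a => a.2)
    have hs : SES R α β := by
      refine ⟨?_, ?_, ?_⟩
      · intro a b hab
        exact h1.inj (congrArg (fun t => t.1) hab)
      · rintro ⟨b, hb⟩
        obtain ⟨a, rfl⟩ := h1.surj b
        exact ⟨⟨a, hb⟩, rfl⟩
      · ext ⟨a, ha⟩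
        constructor
        · intro hb
          obtain ⟨c, hc⟩ := h1.lift a (congrArg (fun t => t.1) hb)
          exact ⟨c, Subtype.ext hc⟩
        · rintro ⟨c, hc⟩
          rw [← hc]
          exact Subtype.ext (h1.comp_zero c)
    exact gc.cons hs hv h3

lemma gc.syz [IsNoetherianRing R] (hC : IsSemidualizing R C) (h : SES R f g) {m : ℕ}
    (hX : gcdimLE R C m X) (hB : IsTotallyCReflexive R C B) : gcdimLE R C (m-1) A := by
  cases m with
  | zero => exact TR.ker h hB hX
  | succ m =>
    obtain ⟨Y, K, k, y, h1, h2, h3⟩ := gc.uncons hX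
    let YB : ModuleCat.{u} R := ModuleCat.of R (↥Y × ↥B)
    let w : ↥YB →ₗ[R] ↥X := LinearMap.coprod y (-g)
    have hw : ∀ a b, w (a, b) = y a - g b := fun a b =>
      (LinearMap.coprod_apply y (-g) (a, b)).trans (sub_eq_add_neg _ _).symm
    let α : ↥K →ₗ[R] ↥(KK w) := LinearMap.codRestrict _ (LinearMap.inl R ↥Y ↥B ∘ₗ k) (fun c => by
      change w (k c, 0) = 0
      rw [hw, h1.comp_zero, map_zero, sub_zero])
    let β : ↥(KK w) →ₗ[R] ↥B := LinearMap.snd R ↥Y ↥B ∘ₗ (LinearMap.ker w).subtype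
    have hs : SES R α β := by
      refine ⟨?_, ?_, ?_⟩
      · intro a b hab
        exact h1.inj (congrArg (fun t => t.1.1) hab)
      · intro b
        obtain ⟨a, ha⟩ := h1.surj (g b)
        exact ⟨⟨(a, b), by rw [LinearMap.mem_ker, hw, ha, sub_self]⟩, rfl⟩
      · ext ⟨⟨a, b⟩, hab⟩
        constructor
        · intro hb
          have hb : b = 0 := hb
          subst hb
          rw [LinearMap.mem_ker, hw, map_zero, sub_zero] at hab
          obtain ⟨c, hc⟩ := h1.lift a hab
          exact ⟨c, Subtype.ext (Prod.ext hc rfl)⟩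
        · rintro ⟨c, hc⟩
          rw [← hc]
          rfl
    let α' : ↥A →ₗ[R] ↥(KK w) := LinearMap.codRestrict _ (LinearMap.inr R ↥Y ↥B ∘ₗ f) (fun c => by
      change w (0, f c) = 0
      rw [hw, h.comp_zero, map_zero, sub_zero])
    let β' : ↥(KK w) →ₗ[R] ↥Y := LinearMap.fst R ↥Y ↥B ∘ₗ (LinearMap.ker w).subtype
    have hs' : SES R α' β' := by
      refine ⟨?_, ?_, ?_⟩
      · intro a b hab
        exact h.inj (congrArg (fun t => t.1.2) hab)
      · intro b
        obtain ⟨a, ha⟩ := h.surj (y b)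
        exact ⟨⟨(b, a), by rw [LinearMap.mem_ker, hw, ha, sub_self]⟩, rfl⟩
      · ext ⟨⟨a, b⟩, hab⟩
        constructor
        · intro hb
          have hb : a = 0 := hb
          subst hb
          rw [LinearMap.mem_ker, hw, map_zero, zero_sub, neg_eq_zero] at hab
          obtain ⟨c, hc⟩ := h.lift b hab
          exact ⟨c, Subtype.ext (Prod.ext rfl hc)⟩
        · rintro ⟨c, hc⟩
          rw [← hc]
          rfl
    exact gc.ker hs' (gc.ext hC hs h3 hB) h2

end GCdim

section LemmaA

variable {R}
variable {C : ModuleCat.{u} R}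

lemma factor_surj {A B Z : Type u} [AddCommGroup A] [Module R A] [AddCommGroup B] [Module R B]
    [AddCommGroup Z] [Module R Z] (p : A →ₗ[R] B) (hp : Function.Surjective p) (q : A →ₗ[R] Z)
    (h : ∀ a, p a = 0 → q a = 0) : ∃ r : B →ₗ[R] Z, ∀ a, r (p a) = q a := by
  choose s hs using hp
  have key : ∀ a b, p a = p b → q a = q b := fun a b hab => by
    rw [← sub_eq_zero, ← map_sub]; exact h _ (by rw [map_sub, hab, sub_self])
  refine ⟨{ toFun := fun x => q (s x), map_add' := ?_, map_smul' := ?_ }, ?_⟩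
  · intro x y
    rw [← map_add]; exact key _ _ (by simp [hs])
  · intro r x
    rw [RingHom.id_apply, ← map_smul]; exact key _ _ (by simp [hs])
  · intro a
    exact key _ _ (by simp [hs])

lemma SES.ofRange {G1 G0 M : ModuleCat.{u} R} (f : ↥G1 →ₗ[R] ↥G0) (π : ↥G0 →ₗ[R] ↥M)
    (hπ : Function.Surjective π) (hf : LinearMap.ker π = LinearMap.range f) :
    SES R (A := ModuleCat.of R (LinearMap.range f)) (LinearMap.range f).subtype π :=
  ⟨Subtype.val_injective, hπ, by simp [hf]⟩

/-- Data for a presentation together with its transpose. -/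
structure Pres (C : ModuleCat.{u} R) {G1 G0 M T : ModuleCat.{u} R} (f : ↥G1 →ₗ[R] ↥G0)
    (π : ↥G0 →ₗ[R] ↥M) (τ : ↥(DD C G1) →ₗ[R] ↥T) : Prop where
  r1 : IsTotallyCReflexive R C G1
  r0 : IsTotallyCReflexive R C G0
  πs : Function.Surjective π
  πk : LinearMap.ker π = LinearMap.range f
  τs : Function.Surjective τ
  τk : LinearMap.ker τ = LinearMap.range (dm C f)

lemma Pres.base [IsNoetherianRing R] (hC : IsSemidualizing R C)
    {G1 G0 M T E : ModuleCat.{u} R} {f : ↥G1 →ₗ[R] ↥G0}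
    {π : ↥G0 →ₗ[R] ↥M} {τ : ↥(DD C G1) →ₗ[R] ↥T} (h : Pres C f π τ)
    (hM : gcdimLE R C 1 M) (e : ↥E ≃ₗ[R] ↥(ExtM R M C 1)) :
    (∃ (Y : ModuleCat.{u} R) (α : ↥E →ₗ[R] ↥T) (β : ↥T →ₗ[R] ↥Y),
      SES R α β ∧ IsTotallyCReflexive R C Y) ∧ Subsingleton (↥E →ₗ[R] ↥C) := by
  have := hC.1
  let I : ModuleCat.{u} R := ModuleCat.of R (LinearMap.range f)
  let j : ↥I →ₗ[R] ↥G0 := (LinearMap.range f).subtype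
  have hj : SES R j π := SES.ofRange f π h.πs h.πk
  have hI : IsTotallyCReflexive R C I := gc.syz hC hj hM h.r0
  let f' : ↥G1 →ₗ[R] ↥I := f.rangeRestrict
  have hf's : Function.Surjective f' := LinearMap.surjective_rangeRestrict f
  have hK : IsTotallyCReflexive R C (KK f') := TR.ker (SES.ofSurj f' hf's) h.r1 hI
  have hd := (SES.ofSurj f' hf's).dual (C := C) (hI.2.2.1 1 one_pos)
  obtain ⟨δ, hδ1, hδ2⟩ := hj.conn C
  have hδs := hδ2 (h.r0.2.2.1 1 one_pos)
  have hδ0 : ∀ ψ, δ (dm C j ψ) = 0 := fun ψ => by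
    have : dm C j ψ ∈ LinearMap.ker δ := by rw [hδ1]; exact ⟨ψ, rfl⟩
    exact this
  have hδ3 : ∀ φ, δ φ = 0 → ∃ ψ, dm C j ψ = φ := fun φ hφ => by
    have : φ ∈ LinearMap.ker δ := hφ
    rw [hδ1] at this
    exact this
  have hτ0 : ∀ ψ, τ (dm C f ψ) = 0 := fun ψ => by
    have : dm C f ψ ∈ LinearMap.ker τ := by rw [h.τk]; exact ⟨ψ, rfl⟩
    exact this
  have hτ3 : ∀ φ, τ φ = 0 → ∃ ψ, dm C f ψ = φ := fun φ hφ => by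
    have : φ ∈ LinearMap.ker τ := hφ
    rw [h.τk] at this
    exact this
  have hfac : ∀ ψ : ↥G0 →ₗ[R] ↥C, dm C f' (dm C j ψ) = dm C f ψ := fun ψ => rfl
  constructor
  · obtain ⟨ε, hε⟩ := factor_surj δ hδs (τ ∘ₗ dm C f') (fun φ hφ => by
      obtain ⟨ψ, rfl⟩ := hδ3 φ hφ
      exact hτ0 ψ)
    obtain ⟨ρ, hρ⟩ := factor_surj τ h.τs (dm C (LinearMap.ker f').subtype) (fun φ hφ => by
      obtain ⟨ψ, rfl⟩ := hτ3 φ hφ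
      rw [← hfac]
      exact hd.comp_zero _)
    refine ⟨DD C (KK f'), ε ∘ₗ e.toLinearMap, ρ, ⟨?_, ?_, ?_⟩, TR.dual hK⟩
    · have : Function.Injective ε := by
        refine (injective_iff_map_eq_zero _).2 fun x hx => ?_
        obtain ⟨φ, rfl⟩ := hδs x
        rw [hε] at hx
        obtain ⟨ψ, hψ⟩ := hτ3 _ hx
        rw [← hfac] at hψ
        rw [← hd.inj hψ]
        exact hδ0 ψ
      exact this.comp e.injective
    · intro y
      obtain ⟨b, rfl⟩ := hd.surj y
      exact ⟨τ b, hρ b⟩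
    · ext y
      obtain ⟨b, rfl⟩ := h.τs y
      constructor
      · intro hb
        rw [LinearMap.mem_ker, hρ] at hb
        obtain ⟨φ, rfl⟩ := hd.lift b hb
        refine ⟨e.symm (δ φ), ?_⟩
        simp [hε]
      · rintro ⟨x, hx⟩
        obtain ⟨φ, hφ⟩ := hδs (e x)
        rw [← hx, LinearMap.mem_ker]
        change ρ (ε (e x)) = 0
        rw [← hφ, hε]
        change ρ (τ (dm C f' φ)) = 0
        rw [hρ]
        exact hd.comp_zero φ
  · refine subsingleton_of_forall_eq 0 fun ξ => LinearMap.ext fun y => ?_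
    obtain ⟨x, hx⟩ := hI.2.1.2 (ξ ∘ₗ e.symm.toLinearMap ∘ₗ δ)
    have hx' : ∀ φ : ↥I →ₗ[R] ↥C, φ x = ξ (e.symm (δ φ)) := fun φ => LinearMap.congr_fun hx φ
    have hjx : j x = 0 := by
      apply h.r0.2.1.1
      rw [map_zero]
      refine LinearMap.ext fun ψ => ?_
      rw [bid_apply]
      refine (hx' (dm C j ψ)).trans ?_
      rw [hδ0]; simp
    have hx0 : x = 0 := hj.inj (hjx.trans (map_zero _).symm)
    obtain ⟨φ, hφ⟩ := hδs (e y)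
    have := hx' φ
    rw [hφ, hx0, map_zero] at this
    simpa using this.symm

lemma Pres.step [IsNoetherianRing R] (hC : IsSemidualizing R C)
    {G1 G0 M T : ModuleCat.{u} R} {f : ↥G1 →ₗ[R] ↥G0}
    {π : ↥G0 →ₗ[R] ↥M} {τ : ↥(DD C G1) →ₗ[R] ↥T} (h : Pres C f π τ)
    (hM : Subsingleton (ExtM R M C 1)) :
    ∃ (I G2 T' : ModuleCat.{u} R) (j : ↥I →ₗ[R] ↥G0) (g : ↥G2 →ₗ[R] ↥G1) (f' : ↥G1 →ₗ[R] ↥I)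
      (τ' : ↥(DD C G2) →ₗ[R] ↥T') (θ : ↥T →ₗ[R] ↥(DD C G2)),
      SES R j π ∧ Pres C g f' τ' ∧ SES R θ τ' ∧ Subsingleton (ExtM R T' C 1) := by
  have := hC.1
  have := h.r1.1
  let I : ModuleCat.{u} R := ModuleCat.of R (LinearMap.range f)
  let j : ↥I →ₗ[R] ↥G0 := (LinearMap.range f).subtype
  have hj : SES R j π := SES.ofRange f π h.πs h.πk
  let f' : ↥G1 →ₗ[R] ↥I := f.rangeRestrict
  have hf's : Function.Surjective f' := LinearMap.surjective_rangeRestrict f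
  obtain ⟨G2, q, hG1, hG2, hq⟩ := exists_proj_cover (KK f')
    (inferInstanceAs (Module.Finite R (LinearMap.ker f')))
  have hG : IsTotallyCReflexive R C G2 := TR.proj hC
  let g : ↥G2 →ₗ[R] ↥G1 := (LinearMap.ker f').subtype ∘ₗ q
  have hg : LinearMap.ker f' = LinearMap.range g := by
    rw [LinearMap.range_comp_of_range_eq_top _ (LinearMap.range_eq_top.2 hq)]; simp
  have hg0 : ∀ a, f' (g a) = 0 := fun a => (q a).2
  let T' : ModuleCat.{u} R := ModuleCat.of R (↥(DD C G2) ⧸ LinearMap.range (dm C g))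
  let τ' : ↥(DD C G2) →ₗ[R] ↥T' := (LinearMap.range (dm C g)).mkQ
  have hτ0 : ∀ ψ, τ (dm C f ψ) = 0 := fun ψ => by
    have : dm C f ψ ∈ LinearMap.ker τ := by rw [h.τk]; exact ⟨ψ, rfl⟩
    exact this
  have hτ3 : ∀ φ, τ φ = 0 → ∃ ψ, dm C f ψ = φ := fun φ hφ => by
    have : φ ∈ LinearMap.ker τ := hφ
    rw [h.τk] at this
    exact this
  obtain ⟨θ, hθ⟩ := factor_surj τ h.τs (dm C g) (fun φ hφ => by
    obtain ⟨ψ, rfl⟩ := hτ3 φ hφ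
    refine LinearMap.ext fun a => ?_
    change ψ (j (f' (g a))) = 0
    rw [hg0, map_zero, map_zero])
  have hP : Pres C g f' τ' := ⟨hG, h.r1, hf's, hg, Submodule.mkQ_surjective _,
    Submodule.ker_mkQ _⟩
  have hs : SES R θ τ' := by
    refine ⟨?_, hP.τs, ?_⟩
    · refine (injective_iff_map_eq_zero _).2 fun x hx => ?_
      obtain ⟨b, rfl⟩ := h.τs x
      rw [hθ] at hx
      obtain ⟨φ, hφ⟩ := factor_surj f' hf's b (fun a ha => by
        have : a ∈ LinearMap.range g := by rw [← hg]; exact ha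
        obtain ⟨c, rfl⟩ := this
        exact LinearMap.congr_fun hx c)
      obtain ⟨ψ, hψ⟩ := hj.extend C hM φ
      have : b = dm C f ψ := by
        refine LinearMap.ext fun a => ?_
        rw [← hφ, ← hψ]; rfl
      rw [this]; exact hτ0 ψ
    · rw [hP.τk]
      ext y
      constructor
      · rintro ⟨b, rfl⟩
        exact ⟨τ b, hθ b⟩
      · rintro ⟨x, rfl⟩
        obtain ⟨b, rfl⟩ := h.τs x
        exact ⟨b, (hθ b).symm⟩
  refine ⟨I, G2, T', j, g, f', τ', θ, hj, hP, hs, ?_⟩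
  refine hs.sub_one C (hG.2.2.2 1 one_pos) fun φ => ?_
  obtain ⟨x, hx⟩ := h.r1.2.1.2 (φ ∘ₗ τ)
  have hx' : ∀ b : ↥G1 →ₗ[R] ↥C, b x = φ (τ b) := fun b => LinearMap.congr_fun hx b
  have hfx : f x = 0 := by
    apply h.r0.2.1.1
    rw [map_zero]
    refine LinearMap.ext fun ψ => ?_
    rw [bid_apply]
    refine (hx' (dm C f ψ)).trans ?_
    rw [hτ0]; simp
  have : x ∈ LinearMap.range g := by rw [← hg]; exact Subtype.ext hfx
  obtain ⟨z, rfl⟩ := this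
  refine ⟨bidualityMap R C G2 z, LinearMap.ext fun y => ?_⟩
  obtain ⟨b, rfl⟩ := h.τs y
  rw [← hx' b]
  change (θ (τ b) : ↥G2 →ₗ[R] ↥C) z = _
  rw [hθ]
  rfl

lemma lemA [IsNoetherianRing R] (hC : IsSemidualizing R C) (n : ℕ) :
    ∀ {G1 G0 M T E : ModuleCat.{u} R} {f : ↥G1 →ₗ[R] ↥G0}
    {π : ↥G0 →ₗ[R] ↥M} {τ : ↥(DD C G1) →ₗ[R] ↥T}, Pres C f π τ →
    gcdimLE R C (n+1) M → (∀ i, 0 < i → i ≤ n → Subsingleton (ExtM R M C i)) →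
    (↥E ≃ₗ[R] ↥(ExtM R M C (n+1))) →
    (∀ i, 0 < i → Nonempty (ExtM R T C i ≃ₗ[R] ExtM R E C (i+n))) ∧
    (∀ m, gcdimLE R C m E → gcdimLE R C (m-n) T) ∧
    (∀ m, gcdimLE R C m T → gcdimLE R C (m+n) E) ∧
    (∀ i, i ≤ n → Subsingleton (ExtM R E C i)) := by
  induction n with
  | zero =>
    intro G1 G0 M T E f π τ h hM _ e
    obtain ⟨⟨Y, α, β, hs, hY⟩, h2⟩ := h.base hC hM e
    refine ⟨fun i hi => hs.iso_left C (hY.2.2.1 i hi) (hY.2.2.1 _ (Nat.succ_pos _)),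
      fun m hm => gc.ext hC hs hm hY, fun m hm => gc.ker hs hm hY, fun i hi => ?_⟩
    obtain rfl : i = 0 := by omega
    exact (ext_zero_equiv E C).some.toEquiv.subsingleton_congr.2 h2
  | succ n ih =>
    intro G1 G0 M T E f π τ h hM hv e
    obtain ⟨I, G2, T', j, g, f', τ', θ, hj, hP, hs, h1⟩ := h.step hC (hv 1 one_pos (by omega))
    have hI : gcdimLE R C (n+1) I := gc.syz hC hj hM h.r0
    have hvI : ∀ i, 0 < i → i ≤ n → Subsingleton (ExtM R I C i) := fun i hi hin =>
      hj.sub_left C (h.r0.2.2.1 i hi) (hv (i+1) (by omega) (by omega))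
    obtain ⟨e2⟩ := hj.shift C (h.r0.2.2.1 (n+1) (by omega)) (h.r0.2.2.1 (n+2) (by omega))
    obtain ⟨a1, a2, a3, a4⟩ := ih hP hI hvI (e.trans e2.symm)
    have hv2 := hP.r1.2.2.2
    have := hC.1
    refine ⟨fun i hi => ?_, fun m hm => ?_, fun m hm => ?_, fun i hi => ?_⟩
    · obtain ⟨e3⟩ := hs.shift C (hv2 i hi) (hv2 (i+1) (by omega))
      obtain ⟨e4⟩ := a1 (i+1) (by omega)
      rw [show i + (n + 1) = i + 1 + n by omega]
      exact ⟨e3.trans e4⟩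
    · exact gc.syz hC hs (a2 m hm) (TR.dual hP.r1)
    · have := a3 (m+1) (gc.cons hs (TR.dual hP.r1) hm)
      rwa [show m + 1 + n = m + (n + 1) by omega] at this
    · rcases Nat.lt_or_ge n i with hi' | hi'
      · obtain rfl : i = 1 + n := by omega
        exact (a1 1 one_pos).some.toEquiv.subsingleton_congr.1 h1
      · exact a4 i hi'

end LemmaA

section LemmaB

variable {R}
variable {C : ModuleCat.{u} R}

lemma exists_pres [IsNoetherianRing R] (hC : IsSemidualizing R C) (E : ModuleCat.{u} R)
    (hE : Module.Finite R ↥E) : ∃ (G1 G0 T : ModuleCat.{u} R) (f : ↥G1 →ₗ[R] ↥G0)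
    (π : ↥G0 →ₗ[R] ↥E) (τ : ↥(DD C G1) →ₗ[R] ↥T), Pres C f π τ := by
  obtain ⟨G0, π, h1, h2, h3⟩ := exists_proj_cover E hE
  obtain ⟨G1, q, h4, h5, h6⟩ := exists_proj_cover (KK π)
    (inferInstanceAs (Module.Finite R (LinearMap.ker π)))
  let f : ↥G1 →ₗ[R] ↥G0 := (LinearMap.ker π).subtype ∘ₗ q
  have hf : LinearMap.ker π = LinearMap.range f := by
    rw [LinearMap.range_comp_of_range_eq_top _ (LinearMap.range_eq_top.2 h6)]; simp
  exact ⟨G1, G0, ModuleCat.of R (↥(DD C G1) ⧸ LinearMap.range (dm C f)), f, π,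
    (LinearMap.range (dm C f)).mkQ, TR.proj hC, TR.proj hC, h3, hf,
    Submodule.mkQ_surjective _, Submodule.ker_mkQ _⟩

lemma lemB [IsNoetherianRing R] (hC : IsSemidualizing R C) {n : ℕ} {E E' : ModuleCat.{u} R}
    (hE : gcdimLE R C (n+1) E) (hv : ∀ i, i ≤ n → Subsingleton (ExtM R E C i))
    (hne : ¬ Subsingleton ↥E) (e : ↥E' ≃ₗ[R] ↥(ExtM R E C (n+1))) :
    gcdimLE R C (n+1) E' ∧ (∀ i, i ≤ n → Subsingleton (ExtM R E' C i)) ∧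
    ¬ Subsingleton (ExtM R E' C (n+1)) := by
  obtain ⟨G1, G0, T, f, π, τ, h⟩ := exists_pres hC E (gc.finite hE)
  obtain ⟨a1, -, a3, a4⟩ := lemA hC n h hE (fun i _ hi => hv i hi) e
  have h0 : Subsingleton (↥E →ₗ[R] ↥C) :=
    (ext_zero_equiv E C).some.toEquiv.subsingleton_congr.1 (hv 0 (Nat.zero_le _))
  have := hC.1
  have hs : SES R (dm C f) τ := by
    refine ⟨?_, h.τs, h.τk⟩
    refine (injective_iff_map_eq_zero _).2 fun ψ hψ => ?_
    obtain ⟨φ, hφ⟩ := factor_surj π h.πs ψ (fun a ha => by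
      have : a ∈ LinearMap.range f := by rw [← h.πk]; exact ha
      obtain ⟨c, rfl⟩ := this
      exact LinearMap.congr_fun hψ c)
    refine LinearMap.ext fun a => ?_
    rw [← hφ, h0.elim φ 0]
    rfl
  have h1 : gcdimLE R C 1 T := gc.cons hs (TR.dual h.r1) (n := 0) (TR.dual h.r0)
  refine ⟨by simpa [add_comm] using a3 1 h1, a4, fun hcon => hne ?_⟩
  rw [add_comm] at hcon
  have hT : Subsingleton (ExtM R T C 1) := (a1 1 one_pos).some.toEquiv.subsingleton_congr.2 hcon
  refine subsingleton_of_forall_eq 0 fun y => ?_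
  obtain ⟨x, rfl⟩ := h.πs y
  obtain ⟨ψ, hψ⟩ := hs.extend C hT (bidualityMap R C G0 x)
  obtain ⟨z, rfl⟩ := h.r1.2.1.2 ψ
  have : f z = x := h.r0.2.1.1 (by rw [← bid_nat]; exact hψ)
  rw [← this]
  have : f z ∈ LinearMap.ker π := by rw [h.πk]; exact ⟨z, rfl⟩
  exact this

end LemmaB

section Grade

variable {R}

/-- Postcomposition on `Ext`. -/
def pc (E : ModuleCat.{u} R) (j : ℕ) {N N' : ModuleCat.{u} R} (f : ↥N →ₗ[R] ↥N') :
    Abelian.Ext E N j →ₗ[R] Abelian.Ext E N' j :=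
  (Abelian.Ext.mk₀ (ModuleCat.ofHom f)).postcompOfLinear R E (add_zero j)

variable (E : ModuleCat.{u} R) (j : ℕ) {N N' N'' : ModuleCat.{u} R}

lemma pc_def (f : ↥N →ₗ[R] ↥N') (x : Abelian.Ext E N j) :
    pc E j f x = x.comp (Abelian.Ext.mk₀ (ModuleCat.ofHom f)) (add_zero j) := rfl

lemma pc_comp (f : ↥N →ₗ[R] ↥N') (g : ↥N' →ₗ[R] ↥N'') (x : Abelian.Ext E N j) :
    pc E j g (pc E j f x) = pc E j (g ∘ₗ f) x := by
  simp only [pc_def]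
  rw [Abelian.Ext.comp_assoc_of_third_deg_zero, Abelian.Ext.mk₀_comp_mk₀]
  rfl

lemma pc_id (x : Abelian.Ext E N j) : pc E j (LinearMap.id : ↥N →ₗ[R] ↥N) x = x := by
  rw [pc_def]; exact Abelian.Ext.comp_mk₀_id x

lemma pc_add (f g : ↥N →ₗ[R] ↥N') (x : Abelian.Ext E N j) :
    pc E j (f + g) x = pc E j f x + pc E j g x := by
  simp only [pc_def]
  rw [ModuleCat.ofHom_add, Abelian.Ext.mk₀_add, Abelian.Ext.comp_add]

lemma pc_smul (r : R) (f : ↥N →ₗ[R] ↥N') (x : Abelian.Ext E N j) :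
    pc E j (r • f) x = r • pc E j f x := by
  simp only [pc_def]
  have : ModuleCat.ofHom (r • f) = r • ModuleCat.ofHom f := rfl
  rw [this, Abelian.Ext.mk₀_smul, Abelian.Ext.comp_smul]

lemma pc_sum {ι : Type} (s : Finset ι) (f : ι → (↥N →ₗ[R] ↥N')) (x : Abelian.Ext E N j) :
    pc E j (∑ i ∈ s, f i) x = ∑ i ∈ s, pc E j (f i) x := by
  classical
  have h0 : pc E j (0 : ↥N →ₗ[R] ↥N') x = 0 := by
    have := pc_smul E j (0 : R) (0 : ↥N →ₗ[R] ↥N') x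
    rwa [zero_smul, zero_smul] at this
  induction s using Finset.induction_on with
  | empty => simpa using h0
  | insert a s ha ih => rw [Finset.sum_insert ha, Finset.sum_insert ha, pc_add, ih]

lemma pc_exact {f : ↥N →ₗ[R] ↥N'} {g : ↥N' →ₗ[R] ↥N''} (h : SES R f g)
    (x : Abelian.Ext E N' j) (hx : pc E j g x = 0) : ∃ y, pc E j f y = x :=
  Abelian.Ext.covariant_sequence_exact₂ E h.shortExact x hx

lemma pc_inj {f : ↥N →ₗ[R] ↥N'} {g : ↥N' →ₗ[R] ↥N''} (h : SES R f g)
    (hs : ∀ i, i + 1 = j → Subsingleton (Abelian.Ext E N'' i))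
    (x : Abelian.Ext E N j) (hx : pc E j f x = 0) : x = 0 := by
  obtain _ | i := j
  · have : Mono (ModuleCat.ofHom f) := (ModuleCat.mono_iff_injective _).2 h.inj
    exact Abelian.Ext.postcomp_mk₀_injective_of_mono E (ModuleCat.ofHom f) (hx.trans (map_zero _).symm)
  · obtain ⟨y, rfl⟩ := Abelian.Ext.covariant_sequence_exact₁ E h.shortExact x hx rfl
    rw [(hs i rfl).elim y 0, Abelian.Ext.zero_comp]

variable (C : ModuleCat.{u} R)

/-- Finite free module. -/
abbrev Fr (R : Type u) [CommRing R] (b : ℕ) : ModuleCat.{u} R := ModuleCat.of R (Fin b → R)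

/-- coordinate projection of the dual of a free module -/
def dpr {b : ℕ} (a : Fin b) : ↥(DD C (Fr R b)) →ₗ[R] ↥C :=
  LinearMap.applyₗ (Pi.single a (1 : R) : Fin b → R)

/-- coordinate inclusion into the dual of a free module -/
def din {b : ℕ} (a : Fin b) : ↥C →ₗ[R] ↥(DD C (Fr R b)) where
  toFun c := (LinearMap.proj a : (Fin b → R) →ₗ[R] R).smulRight c
  map_add' x y := by ext; simp
  map_smul' r x := LinearMap.ext fun v => smul_comm (v a) r x

lemma dpr_apply {b : ℕ} (a : Fin b) (φ : (Fin b → R) →ₗ[R] ↥C) :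
    dpr C a φ = φ (Pi.single a 1) := rfl

lemma din_apply {b : ℕ} (a : Fin b) (c : C) (v : Fin b → R) :
    (din C a c : (Fin b → R) →ₗ[R] ↥C) v = v a • c := rfl

lemma lin_sum {N : Type u} [AddCommGroup N] [Module R N] {b : ℕ} (p : (Fin b → R) →ₗ[R] N)
    (v : Fin b → R) : p v = ∑ a, v a • p (Pi.single a (1 : R) : Fin b → R) := by
  have h1 : v = ∑ a, v a • (Pi.single a (1 : R) : Fin b → R) := by
    ext i
    simp [Finset.sum_apply, Pi.single_apply]
  conv_lhs => rw [h1]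
  exact (map_sum p _ _).trans (Finset.sum_congr rfl fun a _ => map_smul p _ _)

lemma dec_id (b : ℕ) : ∑ a : Fin b, din C a ∘ₗ dpr C a = LinearMap.id := by
  refine LinearMap.ext fun φ => ?_
  rw [LinearMap.sum_apply]
  refine LinearMap.ext fun v => ?_
  change ((∑ a : Fin b, (din C a (dpr C a φ) : (Fin b → R) →ₗ[R] ↥C)) :
    (Fin b → R) →ₗ[R] ↥C) v = φ v
  rw [LinearMap.sum_apply]
  exact (lin_sum φ v).symm

lemma ext_free_zero {b : ℕ} (x : Abelian.Ext E (DD C (Fr R b)) j)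
    (h : ∀ a, pc E j (dpr C a) x = 0) : x = 0 := by
  rw [← pc_id E j x, ← dec_id, pc_sum]
  refine Finset.sum_eq_zero fun a _ => ?_
  rw [← pc_comp, h, map_zero]

lemma ext_free_sub {b : ℕ} (h : Subsingleton (Abelian.Ext E C j)) :
    Subsingleton (Abelian.Ext E (DD C (Fr R b)) j) :=
  subsingleton_of_forall_eq 0 fun x => ext_free_zero E j C x fun _ => h.elim _ _

/-- Finite modules all of whose positive `Ext` into `C` vanish. -/
def PV (S : ModuleCat.{u} R) : Prop :=
  Module.Finite R ↥S ∧ ∀ i : ℕ, 0 < i → Subsingleton (ExtM R S C i)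

variable {C}

lemma PV.ker [IsNoetherianRing R] {S : ModuleCat.{u} R} (h : PV C S) {b : ℕ}
    (p : ↥(Fr R b) →ₗ[R] ↥S) (hp : Function.Surjective p) : PV C (KK p) := by
  have hP : Module.Projective R ↥(Fr R b) := inferInstanceAs (Module.Projective R (Fin b → R))
  have hF : IsNoetherian R ↥(Fr R b) := inferInstanceAs (IsNoetherian R (Fin b → R))
  refine ⟨inferInstanceAs (Module.Finite R (LinearMap.ker p)), fun i hi => ?_⟩
  exact (SES.ofSurj p hp).sub_left C (ext_proj C hi) (h.2 (i+1) (Nat.succ_pos _))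

lemma PV.cover {S : ModuleCat.{u} R} (h : PV C S) : ∃ (b : ℕ) (p : ↥(Fr R b) →ₗ[R] ↥S),
    Function.Surjective p := by
  have := h.1
  exact Module.Finite.exists_fin' R ↥S

lemma PV.ses {S : ModuleCat.{u} R} (h : PV C S) {b : ℕ} (p : ↥(Fr R b) →ₗ[R] ↥S)
    (hp : Function.Surjective p) :
    SES R (dm C p) (dm C (B := Fr R b) (A := KK p) (LinearMap.ker p).subtype) :=
  (SES.ofSurj p hp).dual (h.2 1 one_pos)

lemma grade1 [IsNoetherianRing R] (hv : ∀ i, i < j → Subsingleton (Abelian.Ext E C i)) (i : ℕ) :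
    i < j → ∀ S : ModuleCat.{u} R, PV C S → Subsingleton (Abelian.Ext E (DD C S) i) := by
  induction i with
  | zero =>
    intro hi S hS
    obtain ⟨b, p, hp⟩ := hS.cover
    refine subsingleton_of_forall_eq 0 fun x => ?_
    exact pc_inj E 0 (hS.ses p hp) (fun i hi => by omega) x
      ((ext_free_sub E 0 C (hv 0 hi)).elim _ _)
  | succ i ih =>
    intro hi S hS
    obtain ⟨b, p, hp⟩ := hS.cover
    refine subsingleton_of_forall_eq 0 fun x => ?_
    refine pc_inj E (i+1) (hS.ses p hp) (fun k hk => ?_) x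
      ((ext_free_sub E (i+1) C (hv _ hi)).elim _ _)
    obtain rfl : k = i := by omega
    exact ih (by omega) _ (hS.ker p hp)

lemma grade2 [IsNoetherianRing R] (hC : IsSemidualizing R C) (hE : Module.Finite R ↥E)
    (hv : ∀ i, i < j → Subsingleton (Abelian.Ext E C i))
    (hj : Subsingleton (Abelian.Ext E (DD C C) j)) : Subsingleton (Abelian.Ext E C j) := by
  have hS : PV C C := ⟨hC.1, hC.2.2⟩
  obtain ⟨b, p, hp⟩ := hS.cover
  have hS1 := hS.ker p hp
  obtain ⟨b1, p1, hp1⟩ := hS1.cover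
  have hS2 := hS1.ker p1 hp1
  have := hC.1
  have hHom : Subsingleton (↥C →ₗ[R] Abelian.Ext E C j) := by
    refine subsingleton_of_forall_eq 0 fun φ => ?_
    let x : Abelian.Ext E (DD C (Fr R b)) j :=
      ∑ a : Fin b, pc E j (din C a) (φ (p (Pi.single a (1 : R) : Fin b → R)))
    have hpv : ∀ v : Fin b → R, p v = ∑ a, v a • p (Pi.single a (1 : R) : Fin b → R) := by
      exact fun v => lin_sum p v
    have hx0 : x = 0 := by
      have hq : pc E j (dm C (B := Fr R b) (A := KK p) (LinearMap.ker p).subtype) x = 0 := by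
        refine pc_inj E j (hS1.ses p1 hp1) (fun i hi => ?_) _ ?_
        · exact grade1 E j hv i (by omega) _ hS2
        · refine ext_free_zero E j C _ fun c => ?_
          rw [pc_comp, pc_comp, map_sum, LinearMap.comp_assoc]
          let w : LinearMap.ker p := p1 (Pi.single c (1 : R) : Fin b1 → R)
          have : ∀ a, pc E j (dpr C c ∘ₗ dm C p1 ∘ₗ
              dm C (B := Fr R b) (A := KK p) (LinearMap.ker p).subtype)
              (pc E j (din C a) (φ (p (Pi.single a (1 : R) : Fin b → R)))) =
              (w.1 : Fin b → R) a • φ (p (Pi.single a (1 : R) : Fin b → R)) := by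
            intro a
            rw [pc_comp]
            have : (dpr C c ∘ₗ dm C p1 ∘ₗ
              dm C (B := Fr R b) (A := KK p) (LinearMap.ker p).subtype) ∘ₗ din C a =
              (w.1 : Fin b → R) a • (LinearMap.id : ↥C →ₗ[R] ↥C) := rfl
            rw [this, pc_smul, pc_id]
          rw [Finset.sum_congr rfl fun a _ => this a]
          simp_rw [← map_smul φ]
          rw [← map_sum, ← hpv, show p w.1 = 0 from w.2, map_zero]
      obtain ⟨y, hy⟩ := pc_exact E j (hS.ses p hp) x hq
      rw [← hy, hj.elim y 0, map_zero]
    have hφ : ∀ a, φ (p (Pi.single a (1 : R) : Fin b → R)) = 0 := by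
      intro c
      have h1 : pc E j (dpr C c) x = 0 := by rw [hx0, map_zero]
      rw [map_sum, Finset.sum_eq_single c] at h1
      · rw [pc_comp] at h1
        have : dpr C c ∘ₗ din C c = (LinearMap.id : ↥C →ₗ[R] ↥C) := by
          refine LinearMap.ext fun z => ?_
          change (Pi.single c (1 : R) : Fin b → R) c • z = z
          simp
        rwa [this, pc_id] at h1
      · intro a _ hac
        rw [pc_comp]
        have : dpr C c ∘ₗ din C a = (0 : R) • (LinearMap.id : ↥C →ₗ[R] ↥C) := by
          refine LinearMap.ext fun z => ?_
          change (Pi.single c (1 : R) : Fin b → R) a • z = (0 : R) • z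
          rw [Pi.single_eq_of_ne hac]
        rw [this, pc_smul, zero_smul]
      · simp
    refine LinearMap.ext fun z => ?_
    obtain ⟨v, rfl⟩ := hp z
    rw [hpv, map_sum]
    refine Finset.sum_eq_zero fun a _ => ?_
    rw [map_smul, hφ, smul_zero]
  have hfin : Module.Finite R (Abelian.Ext E C j) :=
    have := ext_finite (A := E) (N := C) j
    Module.Finite.equiv (bridge R E C j).some
  obtain ⟨r, hr, hreg⟩ := IsSMulRegular.subsingleton_linearMap_iff.1 hHom
  have hr0 : r = 0 := by
    refine hC.2.1.1 (LinearMap.ext fun c => ?_)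
    rw [Module.mem_annihilator] at hr
    simp [hr c]
  subst hr0
  exact ⟨fun a b => hreg (by simp)⟩

lemma pc_iso_sub (e : ↥N ≃ₗ[R] ↥N') (h : Subsingleton (Abelian.Ext E N j)) :
    Subsingleton (Abelian.Ext E N' j) := by
  refine subsingleton_of_forall_eq 0 fun x => ?_
  rw [← pc_id E j x, show (LinearMap.id : ↥N' →ₗ[R] ↥N') =
    e.toLinearMap ∘ₗ e.symm.toLinearMap by ext; simp, ← pc_comp, h.elim (pc E j _ x) 0, map_zero]

/-- The grade is computed by `Ext` into `C`. -/
lemma grade_eq [IsNoetherianRing R] (hC : IsSemidualizing R C) (hE : Module.Finite R ↥E) (j : ℕ) :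
    (∀ i, i < j → Subsingleton (ExtM R E C i)) ↔
    (∀ i, i < j → Subsingleton (ExtM R E (ModuleCat.of R R) i)) := by
  let e : ↥(ModuleCat.of R R) ≃ₗ[R] ↥(DD C C) := LinearEquiv.ofBijective
    { toFun := fun r => (r • LinearMap.id : ↥C →ₗ[R] ↥C)
      map_add' := fun r s => add_smul r s _
      map_smul' := fun r s => by simp [mul_smul] } hC.2.1
  have hS : PV C C := ⟨hC.1, hC.2.2⟩
  simp only [sub_iff]
  constructor
  · intro h i hi
    exact pc_iso_sub E i e.symm (grade1 E j h i hi C hS)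
  · intro h i
    induction i using Nat.strong_induction_on with
    | _ i ih =>
      intro hi
      exact grade2 E i hC hE (fun k hk => ih k hk (by omega)) (pc_iso_sub E i e (h i hi))

end Grade

section Main

variable {R}
variable {C : ModuleCat.{u} R}

lemma sInf_nat (S : Set ℕ) (n : ℕ) :
    sInf ((fun i : ℕ => (i : ℕ∞)) '' S) = n ↔ n ∈ S ∧ ∀ m ∈ S, n ≤ m := by
  constructor
  · intro h
    have hne : ((fun i : ℕ => (i : ℕ∞)) '' S).Nonempty := by
      by_contra hcon
      rw [Set.not_nonempty_iff_eq_empty] at hcon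
      rw [hcon, sInf_empty] at h
      exact ENat.natCast_ne_top n h.symm
    obtain ⟨k, hk, hkn⟩ := csInf_mem hne
    have hkn : (k : ℕ∞) = n := hkn.trans h
    obtain rfl : k = n := by exact_mod_cast hkn
    refine ⟨hk, fun m hm => ?_⟩
    have : (k : ℕ∞) ≤ m := by rw [← h]; exact sInf_le ⟨m, hm, rfl⟩
    exact_mod_cast this
  · rintro ⟨h1, h2⟩
    refine le_antisymm (sInf_le ⟨n, h1, rfl⟩) (le_sInf ?_)
    rintro _ ⟨m, hm, rfl⟩
    exact Nat.cast_le.2 (h2 m hm)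

/-- Explicit form of being reduced `G_C`-perfect of dimension `n`. -/
def RP (C M : ModuleCat.{u} R) (n : ℕ) : Prop :=
  gcdimLE R C n M ∧ 0 < n ∧ (∀ i, 0 < i → i < n → Subsingleton (ExtM R M C i)) ∧
    ¬ Subsingleton (ExtM R M C n)

/-- Explicit form of being `G_C`-perfect of dimension `m`. -/
def GP (C M : ModuleCat.{u} R) (m : ℕ) : Prop :=
  gcdimLE R C m M ∧ (∀ i, i < m → Subsingleton (ExtM R M C i)) ∧
    ¬ Subsingleton (ExtM R M C m)

lemma gcdim_eq {M : ModuleCat.{u} R} {n : ℕ} (h : gcdimLE R C n M)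
    (hn : ¬ Subsingleton (ExtM R M C n)) : gcdim R C M = n := by
  refine (sInf_nat _ _).2 ⟨h, fun m hm => ?_⟩
  by_contra hcon
  exact hn (gc.vanish hm n (by omega))

lemma rp_iff (M : ModuleCat.{u} R) (n : ℕ) :
    (IsReducedGCPerfect R C M ∧ gcdim R C M = n) ↔ RP C M n := by
  constructor
  · rintro ⟨⟨-, h1⟩, h2⟩
    rw [h2] at h1
    obtain ⟨⟨h3, h4⟩, h5⟩ := (sInf_nat _ _).1 h1
    refine ⟨((sInf_nat _ _).1 h2).1, h3, fun i hi hin => ?_, h4⟩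
    by_contra hcon
    have := h5 i ⟨hi, hcon⟩
    omega
  · rintro ⟨h1, h2, h3, h4⟩
    have h := gcdim_eq h1 h4
    refine ⟨⟨by rw [h]; exact ENat.natCast_ne_top n, ?_⟩, h⟩
    rw [h]
    refine (sInf_nat _ _).2 ⟨⟨h2, h4⟩, fun m hm => ?_⟩
    by_contra hcon
    exact hm.2 (h3 m hm.1 (by omega))

lemma gp_iff [IsNoetherianRing R] (hC : IsSemidualizing R C) (M : ModuleCat.{u} R) (n : ℕ) :
    (IsGCPerfect R C M ∧ gcdim R C M = n) ↔ GP C M n := by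
  have key : gcdimLE R C n M → ((gradeR R M = n) ↔
      ((∀ i, i < n → Subsingleton (ExtM R M C i)) ∧ ¬ Subsingleton (ExtM R M C n))) := by
    intro h
    have hM := gc.finite h
    have e1 := grade_eq M hC hM n
    have e2 := grade_eq M hC hM (n+1)
    have aux : ∀ N : ModuleCat.{u} R, (∀ i, i < n + 1 → Subsingleton (ExtM R M N i)) ↔
        (∀ i, i < n → Subsingleton (ExtM R M N i)) ∧ Subsingleton (ExtM R M N n) := by
      intro N
      constructor
      · exact fun h => ⟨fun i hi => h i (by omega), h n (by omega)⟩
      · rintro ⟨h1, h2⟩ i hi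
        rcases Nat.lt_succ_iff_lt_or_eq.1 hi with h | rfl
        · exact h1 i h
        · exact h2
    rw [aux, aux] at e2
    have e3 : gradeR R M = n ↔ ((∀ i, i < n → Subsingleton (ExtM R M (ModuleCat.of R R) i)) ∧
        ¬ Subsingleton (ExtM R M (ModuleCat.of R R) n)) := by
      refine (sInf_nat _ _).trans ?_
      constructor
      · rintro ⟨h1, h2⟩
        refine ⟨fun i hi => ?_, h1⟩
        by_contra hcon
        have := h2 i hcon
        omega
      · rintro ⟨h1, h2⟩
        refine ⟨h2, fun m hm => ?_⟩
        by_contra hcon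
        exact hm (h1 m (by omega))
    rw [e3]
    tauto
  constructor
  · rintro ⟨⟨-, h1⟩, h2⟩
    have h3 := ((sInf_nat _ _).1 h2).1
    rw [h2] at h1
    exact ⟨h3, (key h3).1 h1⟩
  · rintro ⟨h1, h2⟩
    have h := gcdim_eq h1 h2.2
    refine ⟨⟨by rw [h]; exact ENat.natCast_ne_top n, ?_⟩, h⟩
    rw [h]
    exact (key h1).2 h2

lemma Pres.main [IsNoetherianRing R] (hC : IsSemidualizing R C)
    {G1 G0 M T : ModuleCat.{u} R} {f : ↥G1 →ₗ[R] ↥G0}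
    {π : ↥G0 →ₗ[R] ↥M} {τ : ↥(DD C G1) →ₗ[R] ↥T} (h : Pres C f π τ) {n t : ℕ}
    (hM : RP C M n) (hE : GP C (ExtM R M C n) (n + t - 1)) :
    RP C T t ∧ GP C (ExtM R T C t) (n + t - 1) := by
  obtain ⟨h1, h2, h3, h4⟩ := hM
  obtain ⟨k, rfl⟩ : ∃ k, n = k + 1 := ⟨n - 1, by omega⟩
  obtain ⟨a1, a2, -, a4⟩ := lemA hC k h h1 (fun i hi hik => h3 i hi (by omega))
    (LinearEquiv.refl R ↥(ExtM R M C (k+1)))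
  rw [show k + 1 + t - 1 = t + k by omega] at hE ⊢
  obtain ⟨b1, b2, b3⟩ := hE
  have ht : 0 < t := by
    by_contra hcon
    exact b3 (a4 _ (by omega))
  obtain ⟨s, rfl⟩ : ∃ s, t = s + 1 := ⟨t - 1, by omega⟩
  obtain ⟨e⟩ := a1 (s+1) ht
  refine ⟨⟨?_, ht, fun i hi hit => ?_, fun hcon => b3 ?_⟩, ?_⟩
  · have := a2 _ b1
    rwa [show s + 1 + k - k = s + 1 by omega] at this
  · exact (a1 i hi).some.toEquiv.subsingleton_congr.2 (b2 _ (by omega))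
  · exact e.toEquiv.subsingleton_congr.1 hcon
  · rw [show s + 1 + k = s + k + 1 by omega] at b1 b2 b3 e ⊢
    obtain ⟨c1, c2, c3⟩ := lemB hC b1 (fun i hi => b2 i (by omega)) h4 e
    exact ⟨c1, fun i hi => c2 i (by omega), c3⟩

lemma Pres.flip [IsNoetherianRing R] (hC : IsSemidualizing R C)
    {G1 G0 M T : ModuleCat.{u} R} {f : ↥G1 →ₗ[R] ↥G0}
    {π : ↥G0 →ₗ[R] ↥M} {τ : ↥(DD C G1) →ₗ[R] ↥T} (h : Pres C f π τ) :
    ∃ π' : ↥(DD C (DD C G0)) →ₗ[R] ↥M, Pres C (dm C f) τ π' := by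
  have := hC.1
  let e : ↥G0 ≃ₗ[R] ↥(DD C (DD C G0)) := LinearEquiv.ofBijective _ h.r0.2.1
  have he : ∀ a, e a = bidualityMap R C G0 a := fun a => rfl
  refine ⟨π ∘ₗ e.symm.toLinearMap, TR.dual h.r0, TR.dual h.r1, h.τs, h.τk,
    h.πs.comp e.symm.surjective, ?_⟩
  ext y
  obtain ⟨x, rfl⟩ := e.surjective y
  have h1 : e x ∈ LinearMap.ker (π ∘ₗ e.symm.toLinearMap) ↔ x ∈ LinearMap.ker π := by simp
  rw [h1, h.πk]
  constructor
  · rintro ⟨z, rfl⟩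
    exact ⟨bidualityMap R C G1 z, bid_nat f z⟩
  · rintro ⟨ξ, hξ⟩
    obtain ⟨z, rfl⟩ := h.r1.2.1.2 ξ
    rw [bid_nat, ← he] at hξ
    exact ⟨z, e.injective hξ⟩

lemma Pres.iff [IsNoetherianRing R] (hC : IsSemidualizing R C)
    {G1 G0 M T : ModuleCat.{u} R} {f : ↥G1 →ₗ[R] ↥G0}
    {π : ↥G0 →ₗ[R] ↥M} {τ : ↥(DD C G1) →ₗ[R] ↥T} (h : Pres C f π τ) (n t : ℕ) :
    (IsReducedGCPerfect R C M ∧ gcdim R C M = n ∧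
      IsGCPerfect R C (ExtM R M C n) ∧
      gcdim R C (ExtM R M C n) = ((n + t - 1 : ℕ) : ℕ∞)) ↔
    (IsReducedGCPerfect R C T ∧ gcdim R C T = t ∧
      IsGCPerfect R C (ExtM R T C t) ∧
      gcdim R C (ExtM R T C t) = ((n + t - 1 : ℕ) : ℕ∞)) := by
  rw [← and_assoc, rp_iff, gp_iff hC, ← and_assoc, rp_iff, gp_iff hC]
  constructor
  · rintro ⟨h1, h2⟩
    exact h.main hC h1 h2
  · rintro ⟨h1, h2⟩
    obtain ⟨π', h'⟩ := h.flip hC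
    rw [add_comm n t] at h2 ⊢
    exact h'.main hC h1 h2

lemma pres_of_transpose [IsNoetherianRing R] (hC : IsSemidualizing R C) {M T : ModuleCat.{u} R}
    (h : IsTransposeC R C M T) : ∃ (G1 G0 : ModuleCat.{u} R) (f : ↥G1 →ₗ[R] ↥G0)
    (π : ↥G0 →ₗ[R] ↥M) (τ : ↥(DD C G1) →ₗ[R] ↥T), Pres C f π τ := by
  obtain ⟨P1, P0, d, π, ⟨h1, h2, ⟨h3, h4, -⟩, h5, h6, -⟩, ⟨e⟩⟩ := h
  refine ⟨P1, P0, d, π, e.symm.toLinearMap ∘ₗ (LinearMap.range (dm C d)).mkQ, TR.proj hC,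
    TR.proj hC, h4, h5.symm, e.symm.surjective.comp (Submodule.mkQ_surjective _), ?_⟩
  refine Eq.trans ?_ (Submodule.ker_mkQ (LinearMap.range (dm C d)))
  ext x
  simp

lemma exists_transpose [IsNoetherianRing R] (hsp : IsSemiperfectRing R) (C M : ModuleCat.{u} R)
    (hM : Module.Finite R ↥M) : ∃ T : ModuleCat.{u} R, IsTransposeC R C M T := by
  obtain ⟨P0, π, h1, h2⟩ := hsp M hM
  obtain ⟨P1, q, h3, h4, h5, h6⟩ := hsp (KK π) (inferInstanceAs (Module.Finite R (LinearMap.ker π)))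
  let d : ↥P1 →ₗ[R] ↥P0 := (LinearMap.ker π).subtype ∘ₗ q
  refine ⟨ModuleCat.of R (↥(DD C P1) ⧸ LinearMap.range (dm C d)), P1, P0, d, π,
    ⟨h3, h1, h2, ?_, h4, ?_⟩, ⟨LinearEquiv.refl R _⟩⟩
  · rw [LinearMap.range_comp_of_range_eq_top _ (LinearMap.range_eq_top.2 h5)]; simp
  · intro N hN
    apply h6
    rw [← hN]
    congr 1
    ext x
    simp [d]

end Main

/-- equivalence between: (i) `M` reduced `G_C`-perfect of dimension `n`
with `Ext_R^n(M,C)` `G_C`-perfect of dimension `n+t-1`; and (ii) the same for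
`Tr_C(M)` with `t` in place of `n`. -/
theorem statement13 [IsNoetherianRing R] (hsp : IsSemiperfectRing R)
    (C : ModuleCat.{u} R) (hC : IsSemidualizing R C)
    (M : ModuleCat.{u} R) (hMfin : Module.Finite R ↥M)
    (n t : ℕ) :
    (IsReducedGCPerfect R C M ∧ gcdim R C M = n ∧
      IsGCPerfect R C (ExtM R M C n) ∧
      gcdim R C (ExtM R M C n) = ((n + t - 1 : ℕ) : ℕ∞)) ↔
    (∀ T : ModuleCat.{u} R, IsTransposeC R C M T →
      IsReducedGCPerfect R C T ∧ gcdim R C T = t ∧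
      IsGCPerfect R C (ExtM R T C t) ∧
      gcdim R C (ExtM R T C t) = ((n + t - 1 : ℕ) : ℕ∞)) := by
  constructor
  · intro h T hT
    obtain ⟨G1, G0, f, π, τ, hP⟩ := pres_of_transpose hC hT
    exact (hP.iff hC n t).1 h
  · intro h
    obtain ⟨T, hT⟩ := exists_transpose hsp C M hMfin
    obtain ⟨G1, G0, f, π, τ, hP⟩ := pres_of_transpose hC hT
    exact (hP.iff hC n t).2 (h T hT)

end
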